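/- arXiv:2405.12064 — 4 statements merged into one kernel-verified Lean document; each statement's English description precedes it below -/
import Mathlib

section
/- Let 𝕎 = ⋃_{i=0}^{J−1} 𝕎_i ⊆ [−1/2, 1/2]² be a cubic multiband set consisting of J ≥ 1 pairwise disjoint closed rectangles, with total Lebesgue measure ‖𝕎‖, and fix ε ∈ (0, 1). Then there exist constants C₅ > 0, c > 0 and integers M̃₁, Ñ₁ ≥ 1 (depending only on 𝕎 and ε) such that for all M ≥ M̃₁, N ≥ Ñ₁ and every index p ∈ {0, …, MN−1} with p ≤ J − 1 + ⌊MN·‖𝕎‖·(1−ε)⌋, the p-th eigenvalue satisfies λ_{(M,N),𝕎}^{(p)} ≥ 1 − 6·M²·N²·C₅·e^{−c·min(M,N)}. -/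
open MeasureTheory Matrix Real Set

/-- The 2-D prolate matrix `B_{(M,N),𝕎}`, indexed by pairs, with entries
`∫_𝕎 exp(2πi (f (m−p) + g (n−q))) df dg`. -/
noncomputable def prolate2D (M N : ℕ) (𝕎 : Set (ℝ × ℝ)) :
    Matrix (Fin M × Fin N) (Fin M × Fin N) ℂ :=
  fun i j => ∫ fg in 𝕎,
    Complex.exp (2 * (Real.pi : ℂ) * Complex.I *
      ((fg.1 : ℂ) * (((i.1 : ℕ) : ℂ) - ((j.1 : ℕ) : ℂ)) +
       (fg.2 : ℂ) * (((i.2 : ℕ) : ℂ) - ((j.2 : ℕ) : ℂ))))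

/-- The closed rectangle `[f0 − W0, f0 + W0] × [f1 − W1, f1 + W1] ⊆ ℝ²`. -/
def rect2 (f0 f1 W0 W1 : ℝ) : Set (ℝ × ℝ) :=
  Set.Icc (f0 - W0) (f0 + W0) ×ˢ Set.Icc (f1 - W1) (f1 + W1)

noncomputable def ee (t : ℝ) : ℂ := Complex.exp (-(2 * (Real.pi : ℂ) * Complex.I * (t : ℂ)))

lemma ee_eq (t : ℝ) : ee t = Complex.exp (((-(2 * Real.pi * t) : ℝ) : ℂ) * Complex.I) := by
  unfold ee; congr 1; push_cast; ring

lemma norm_ee (t : ℝ) : ‖ee t‖ = 1 := by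
  rw [ee_eq, Complex.norm_exp_ofReal_mul_I]

lemma ee_add (s t : ℝ) : ee (s + t) = ee s * ee t := by
  unfold ee; rw [← Complex.exp_add]; congr 1; push_cast; ring

lemma conj_ee (t : ℝ) : (starRingEnd ℂ) (ee t) = ee (-t) := by
  unfold ee; rw [← Complex.exp_conj]; congr 1; simp [map_ofNat]

lemma ee_pow (t : ℝ) (n : ℕ) : ee t ^ n = ee (n * t) := by
  unfold ee; rw [← Complex.exp_nat_mul]; congr 1; push_cast; ring

lemma ee_zero : ee 0 = 1 := by simp [ee]

lemma ee_mul_conj (t : ℝ) : ee t * (starRingEnd ℂ) (ee t) = 1 := by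
  rw [conj_ee, ← ee_add]; simp [ee_zero]

lemma ee_int (n : ℤ) : ee n = 1 := by
  unfold ee; rw [Complex.exp_eq_one_iff]; exact ⟨-n, by push_cast; ring⟩

lemma ee_eq_one {t : ℝ} (h : ee t = 1) : ∃ n : ℤ, t = n := by
  unfold ee at h; rw [Complex.exp_eq_one_iff] at h
  obtain ⟨n, hn⟩ := h
  refine ⟨-n, ?_⟩
  have h2 : (2 * (Real.pi : ℂ) * Complex.I) ≠ 0 := Complex.two_pi_I_ne_zero
  have h3 : (2 * (Real.pi : ℂ) * Complex.I) * ((t : ℂ) + n) = 0 := by linear_combination -hn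
  have h4 : (t : ℂ) + n = 0 := (mul_eq_zero.mp h3).resolve_left h2
  have h5 : ((t + n : ℝ) : ℂ) = 0 := by push_cast; exact h4
  have h6 : t + n = 0 := by exact_mod_cast h5
  push_cast; linarith

/-- grid points -/
noncomputable def gp (M' k : ℕ) : ℝ := (k : ℝ) / M' - 1 / 2

lemma orth (M' a b : ℕ) (ha : a < M') (hb : b < M') :
    ∑ k ∈ Finset.range M', ee (gp M' k) ^ a * (starRingEnd ℂ) (ee (gp M' k)) ^ b
      = if a = b then (M' : ℂ) else 0 := by
  have hM : (M' : ℝ) ≠ 0 := by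
    have : 0 < M' := by omega
    positivity
  split_ifs with h
  · subst h
    simp [← mul_pow, ee_mul_conj]
  · set ζ := ee (((a : ℝ) - b) / M') with hζ
    have h1 : ∀ k ∈ Finset.range M', ee (gp M' k) ^ a * (starRingEnd ℂ) (ee (gp M' k)) ^ b
        = ee (-((a : ℝ) - b) / 2) * ζ ^ k := by
      intro k _
      rw [conj_ee, hζ, ee_pow, ee_pow, ee_pow, ← ee_add, ← ee_add]
      congr 1; unfold gp; field_simp; ring
    rw [Finset.sum_congr rfl h1, ← Finset.mul_sum]
    have hne : ζ ≠ 1 := by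
      intro h1
      obtain ⟨n, hn⟩ := ee_eq_one h1
      have h2 : (a : ℝ) - b = n * M' := by field_simp at hn; linarith
      have h3 : (a : ℤ) - b = n * M' := by exact_mod_cast h2
      have hn0 : n = 0 := by
        have hM0 : (0:ℤ) < M' := by omega
        by_contra hne
        rcases lt_or_gt_of_ne hne with hl | hl
        · have : n ≤ -1 := by omega
          nlinarith
        · have : 1 ≤ n := by omega
          nlinarith
      rw [hn0] at h3; omega
    rw [geom_sum_eq hne]
    have : ζ ^ M' = 1 := by
      rw [hζ, ee_pow]
      have : (M' : ℝ) * (((a : ℝ) - b) / M') = ((a - b : ℤ) : ℝ) := by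
        push_cast; field_simp
      rw [this, ee_int]
    simp [this]

/-- sampling coefficients -/
noncomputable def sc (M' K : ℕ) (x0 : ℝ) (k : ℕ) : ℂ :=
  ((1 + ee (gp M' k) * (starRingEnd ℂ) (ee x0)) / 2) ^ K *
    ((1 / (M' : ℂ)) * ∑ j ∈ Finset.range M', (ee x0 * (starRingEnd ℂ) (ee (gp M' k))) ^ j)

lemma sampling (M' K m : ℕ) (h : m + K < M') (x0 : ℝ) :
    ∑ k ∈ Finset.range M', sc M' K x0 k * ee (gp M' k) ^ m = ee x0 ^ m := by
  have hM : (M' : ℂ) ≠ 0 := by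
    have : M' ≠ 0 := by omega
    exact_mod_cast this
  have e1 : ∀ k, sc M' K x0 k * ee (gp M' k) ^ m =
      ∑ s ∈ Finset.range (K + 1), ∑ j ∈ Finset.range M',
        ((K.choose s : ℂ) / 2 ^ K / M' * (starRingEnd ℂ) (ee x0) ^ s * ee x0 ^ j) *
          (ee (gp M' k) ^ (s + m) * (starRingEnd ℂ) (ee (gp M' k)) ^ j) := by
    intro k
    unfold sc
    rw [div_pow, add_comm (1 : ℂ), add_pow, Finset.sum_div, Finset.sum_mul, Finset.sum_mul]
    refine Finset.sum_congr rfl fun s _ => ?_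
    rw [Finset.mul_sum, Finset.mul_sum, Finset.sum_mul]
    refine Finset.sum_congr rfl fun j _ => ?_
    rw [mul_pow, mul_pow, pow_add]
    ring
  rw [Finset.sum_congr rfl fun k _ => e1 k, Finset.sum_comm]
  have e2 : ∀ s ∈ Finset.range (K + 1), (∑ k ∈ Finset.range M', ∑ j ∈ Finset.range M',
        ((K.choose s : ℂ) / 2 ^ K / M' * (starRingEnd ℂ) (ee x0) ^ s * ee x0 ^ j) *
          (ee (gp M' k) ^ (s + m) * (starRingEnd ℂ) (ee (gp M' k)) ^ j))
        = (K.choose s : ℂ) / 2 ^ K * ee x0 ^ m := by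
    intro s hs
    rw [Finset.mem_range] at hs
    rw [Finset.sum_comm]
    have e3 : ∀ j ∈ Finset.range M', (∑ k ∈ Finset.range M',
        ((K.choose s : ℂ) / 2 ^ K / M' * (starRingEnd ℂ) (ee x0) ^ s * ee x0 ^ j) *
          (ee (gp M' k) ^ (s + m) * (starRingEnd ℂ) (ee (gp M' k)) ^ j))
        = ((K.choose s : ℂ) / 2 ^ K / M' * (starRingEnd ℂ) (ee x0) ^ s * ee x0 ^ j) *
          (if s + m = j then (M' : ℂ) else 0) := by
      intro j hj
      rw [← Finset.mul_sum, orth M' (s + m) j (by omega) (Finset.mem_range.mp hj)]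
    rw [Finset.sum_congr rfl e3]
    simp only [mul_ite, mul_zero]
    rw [Finset.sum_ite_eq, if_pos (Finset.mem_range.mpr (by omega))]
    have : (starRingEnd ℂ) (ee x0) ^ s * ee x0 ^ (s + m) = ee x0 ^ m := by
      rw [pow_add, ← mul_assoc, ← mul_pow, mul_comm ((starRingEnd ℂ) (ee x0)), ee_mul_conj]
      simp
    rw [← this]
    field_simp
  rw [Finset.sum_congr rfl e2, ← Finset.sum_mul, ← Finset.sum_div]
  have : ∑ i ∈ Finset.range (K + 1), (K.choose i : ℂ) = 2 ^ K := by
    exact_mod_cast Nat.sum_range_choose K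
  rw [this, div_self (pow_ne_zero _ two_ne_zero), one_mul]

lemma norm_half (t : ℝ) : ‖(1 + ee t) / 2‖ = |Real.cos (Real.pi * t)| := by
  have h : (1 + ee t) / 2 = ee (t / 2) * ((Real.cos (Real.pi * t) : ℝ) : ℂ) := by
    have h1 : ee t = ee (t/2) * ee (t/2) := by rw [← ee_add]; congr 1; ring
    have h2 : (1 : ℂ) = ee (t/2) * ee (-(t/2)) := by rw [← ee_add]; simp [ee_zero]
    have h3 : ((Real.cos (Real.pi * t) : ℝ) : ℂ) = (ee (t/2) + ee (-(t/2))) / 2 := by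
      rw [Complex.ofReal_cos, Complex.cos, ee, ee, add_comm]
      congr 3 <;> (push_cast; ring)
    rw [h3]; nth_rewrite 1 [h2]; rw [h1]; ring
  rw [h, norm_mul, norm_ee, one_mul, Complex.norm_real, Real.norm_eq_abs]

lemma norm_sc_le (M' K : ℕ) (hM : 0 < M') (x0 : ℝ) (k : ℕ) :
    ‖sc M' K x0 k‖ ≤ |Real.cos (Real.pi * (gp M' k - x0))| ^ K := by
  unfold sc
  rw [conj_ee, ← ee_add, norm_mul, norm_pow, ← sub_eq_add_neg, norm_half]
  refine mul_le_of_le_one_right (by positivity) ?_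
  rw [norm_mul, conj_ee, ← ee_add]
  have : ‖∑ j ∈ Finset.range M', ee (x0 + -gp M' k) ^ j‖ ≤ M' := by
    refine (norm_sum_le _ _).trans ?_
    simp [norm_ee]
  have hM' : (0 : ℝ) < M' := by exact_mod_cast hM
  rw [norm_div, norm_one, Complex.norm_natCast, one_div, inv_mul_le_iff₀ hM', mul_one]
  exact this

lemma norm_sc_le_one (M' K : ℕ) (hM : 0 < M') (x0 : ℝ) (k : ℕ) : ‖sc M' K x0 k‖ ≤ 1 :=
  (norm_sc_le M' K hM x0 k).trans (pow_le_one₀ (abs_nonneg _) (Real.abs_cos_le_one _))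

lemma abs_cos_le (r t : ℝ) (hr : 0 < r) (hr2 : r < 1 / 2) (h1 : r ≤ |t|) (h2 : |t| ≤ 1 - r) :
    |Real.cos (Real.pi * t)| ≤ Real.cos (Real.pi * r) := by
  have hp := Real.pi_pos
  have h0 : Real.cos (Real.pi * t) = Real.cos (Real.pi * |t|) := by
    rcases abs_cases t with ⟨h, _⟩ | ⟨h, _⟩ <;> rw [h]
    rw [← Real.cos_neg]; congr 1; ring
  rw [h0, abs_le]
  constructor
  · have : -Real.cos (Real.pi * r) = Real.cos (Real.pi * (1 - r)) := by
      rw [mul_sub, mul_one, Real.cos_pi_sub]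
    rw [this]
    apply Real.cos_le_cos_of_nonneg_of_le_pi <;> nlinarith
  · apply Real.cos_le_cos_of_nonneg_of_le_pi <;> nlinarith

lemma norm_sc_small (M' K : ℕ) (hM : 0 < M') (x0 r : ℝ) (k : ℕ) (hr : 0 < r) (hr2 : r < 1 / 2)
    (h1 : r ≤ |gp M' k - x0|) (h2 : |gp M' k - x0| ≤ 1 - r) :
    ‖sc M' K x0 k‖ ≤ Real.cos (Real.pi * r) ^ K :=
  (norm_sc_le M' K hM x0 k).trans
    (pow_le_pow_left₀ (abs_nonneg _) (abs_cos_le r _ hr hr2 h1 h2) K)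

lemma plancherel (M M' : ℕ) (h : M ≤ M') (x : Fin M → ℂ) :
    ∑ k ∈ Finset.range M', ‖∑ m, x m * ee (gp M' k) ^ (m : ℕ)‖ ^ 2 = M' * ∑ m, ‖x m‖ ^ 2 := by
  have key : ∑ k ∈ Finset.range M', (((‖∑ m, x m * ee (gp M' k) ^ (m : ℕ)‖ ^ 2 : ℝ)) : ℂ)
      = M' * ∑ m, ((‖x m‖ ^ 2 : ℝ) : ℂ) := by
    have e1 : ∀ k ∈ Finset.range M', (((‖∑ m, x m * ee (gp M' k) ^ (m : ℕ)‖ ^ 2 : ℝ)) : ℂ)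
        = ∑ m : Fin M, ∑ n : Fin M, (x m * (starRingEnd ℂ) (x n)) *
          (ee (gp M' k) ^ (m : ℕ) * (starRingEnd ℂ) (ee (gp M' k)) ^ (n : ℕ)) := by
      intro k _
      push_cast
      rw [← Complex.mul_conj', map_sum, Finset.sum_mul_sum]
      refine Finset.sum_congr rfl fun m _ => Finset.sum_congr rfl fun n _ => ?_
      rw [map_mul, map_pow]; ring
    rw [Finset.sum_congr rfl e1, Finset.sum_comm, Finset.mul_sum]
    refine Finset.sum_congr rfl fun m _ => ?_
    rw [Finset.sum_comm]
    have e2 : ∀ n ∈ (Finset.univ : Finset (Fin M)), (∑ k ∈ Finset.range M',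
        (x m * (starRingEnd ℂ) (x n)) *
          (ee (gp M' k) ^ (m : ℕ) * (starRingEnd ℂ) (ee (gp M' k)) ^ (n : ℕ)))
        = if m = n then (x m * (starRingEnd ℂ) (x n)) * M' else 0 := by
      intro n _
      rw [← Finset.mul_sum, orth M' m n (by omega) (by omega)]
      simp [Fin.ext_iff]
    rw [Finset.sum_congr rfl e2, Finset.sum_ite_eq, if_pos (Finset.mem_univ _), Complex.mul_conj']
    push_cast; ring
  exact_mod_cast key

noncomputable def X2 {M N : ℕ} (x : Fin M × Fin N → ℂ) (f g : ℝ) : ℂ :=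
  ∑ j, x j * (ee f ^ (j.1 : ℕ) * ee g ^ (j.2 : ℕ))

lemma sampling2 {M N : ℕ} (M' N' K K' : ℕ) (hM : M + K ≤ M') (hN : N + K' ≤ N')
    (x : Fin M × Fin N → ℂ) (f g : ℝ) :
    X2 x f g = ∑ q ∈ Finset.range M' ×ˢ Finset.range N',
      sc M' K f q.1 * sc N' K' g q.2 * X2 x (gp M' q.1) (gp N' q.2) := by
  unfold X2
  simp_rw [Finset.mul_sum]
  rw [Finset.sum_comm]
  refine Finset.sum_congr rfl fun j _ => ?_
  rw [← sampling M' K j.1 (by omega) f, ← sampling N' K' j.2 (by omega) g, Finset.sum_mul_sum,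
    ← Finset.sum_product', Finset.mul_sum]
  refine Finset.sum_congr rfl fun q _ => ?_
  ring

lemma plancherel2 {M N : ℕ} (M' N' : ℕ) (hM : M ≤ M') (hN : N ≤ N')
    (x : Fin M × Fin N → ℂ) :
    ∑ q ∈ Finset.range M' ×ˢ Finset.range N', ‖X2 x (gp M' q.1) (gp N' q.2)‖ ^ 2
      = M' * N' * ∑ j, ‖x j‖ ^ 2 := by
  rw [Finset.sum_product_right]
  have e : ∀ l ∈ Finset.range N', ∑ k ∈ Finset.range M', ‖X2 x (gp M' k) (gp N' l)‖ ^ 2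
      = M' * ∑ m : Fin M, ‖∑ n : Fin N, x (m, n) * ee (gp N' l) ^ (n : ℕ)‖ ^ 2 := by
    intro l _
    rw [← plancherel M M' hM]
    refine Finset.sum_congr rfl fun k _ => ?_
    congr 2
    unfold X2
    rw [Fintype.sum_prod_type]
    refine Finset.sum_congr rfl fun m _ => ?_
    rw [Finset.sum_mul]
    refine Finset.sum_congr rfl fun n _ => ?_
    ring
  simp only
  rw [Finset.sum_congr rfl e, ← Finset.mul_sum, Finset.sum_comm,
    Finset.sum_congr rfl fun m _ => plancherel N N' hN fun n => x (m, n),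
    ← Finset.mul_sum, ← mul_assoc, Fintype.sum_prod_type]

lemma X2_small {M N : ℕ} (M' N' K K' : ℕ) (hM : M + K ≤ M') (hN : N + K' ≤ N')
    (x : Fin M × Fin N → ℂ) (f g δ : ℝ) (good : Finset (ℕ × ℕ))
    (hx : ∀ q ∈ (Finset.range M' ×ˢ Finset.range N') \ good, X2 x (gp M' q.1) (gp N' q.2) = 0)
    (hgood : good ⊆ Finset.range M' ×ˢ Finset.range N')
    (hδ : ∀ q ∈ good, ‖sc M' K f q.1 * sc N' K' g q.2‖ ≤ δ) :
    ‖X2 x f g‖ ^ 2 ≤ δ ^ 2 * (M' * N') ^ 2 * ∑ j, ‖x j‖ ^ 2 := by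
  have h1 : X2 x f g = ∑ q ∈ good,
      sc M' K f q.1 * sc N' K' g q.2 * X2 x (gp M' q.1) (gp N' q.2) := by
    rw [sampling2 M' N' K K' hM hN x f g]
    symm
    refine Finset.sum_subset hgood fun q hq hq2 => ?_
    rw [hx q (Finset.mem_sdiff.mpr ⟨hq, hq2⟩), mul_zero]
  have h2 : ‖X2 x f g‖ ≤ ∑ q ∈ good, δ * ‖X2 x (gp M' q.1) (gp N' q.2)‖ := by
    rw [h1]
    refine (norm_sum_le _ _).trans (Finset.sum_le_sum fun q hq => ?_)
    rw [norm_mul]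
    exact mul_le_mul_of_nonneg_right (hδ q hq) (norm_nonneg _)
  have h3 : ‖X2 x f g‖ ^ 2 ≤ (∑ q ∈ good, δ ^ 2) *
      (∑ q ∈ good, ‖X2 x (gp M' q.1) (gp N' q.2)‖ ^ 2) :=
    (pow_le_pow_left₀ (norm_nonneg _) h2 2).trans (Finset.sum_mul_sq_le_sq_mul_sq _ _ _)
  have h4 : ∑ q ∈ good, ‖X2 x (gp M' q.1) (gp N' q.2)‖ ^ 2 ≤ M' * N' * ∑ j, ‖x j‖ ^ 2 := by
    rw [← plancherel2 M' N' (by omega) (by omega)]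
    exact Finset.sum_le_sum_of_subset_of_nonneg hgood fun _ _ _ => by positivity
  have h5 : ∑ q ∈ good, δ ^ 2 ≤ M' * N' * δ ^ 2 := by
    rw [Finset.sum_const, nsmul_eq_mul]
    refine mul_le_mul_of_nonneg_right ?_ (by positivity)
    have := Finset.card_le_card hgood
    rw [Finset.card_product, Finset.card_range, Finset.card_range] at this
    exact_mod_cast this
  calc _ ≤ _ := h3
    _ ≤ (M' * N' * δ ^ 2) * (M' * N' * ∑ j, ‖x j‖ ^ 2) :=
      mul_le_mul h5 h4 (Finset.sum_nonneg fun _ _ => by positivity) (by positivity)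
    _ = _ := by ring

def usq : Set (ℝ × ℝ) := Set.Icc (-(1 / 2) : ℝ) (1 / 2) ×ˢ Set.Icc (-(1 / 2) : ℝ) (1 / 2)

lemma continuous_ee : Continuous ee := by unfold ee; fun_prop

lemma prolate2D_eq (M N : ℕ) (S : Set (ℝ × ℝ)) (i j : Fin M × Fin N) :
    prolate2D M N S i j = ∫ s in S,
      (starRingEnd ℂ) (ee s.1 ^ (i.1 : ℕ) * ee s.2 ^ (i.2 : ℕ)) *
        (ee s.1 ^ (j.1 : ℕ) * ee s.2 ^ (j.2 : ℕ)) := by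
  unfold prolate2D
  congr 1
  funext s
  rw [map_mul, map_pow, map_pow, conj_ee, conj_ee, ee_pow, ee_pow, ee_pow, ee_pow,
    ← ee_add, ← ee_add, ← ee_add]
  unfold ee
  congr 1; push_cast; ring

lemma measurableSet_sq : MeasurableSet usq := measurableSet_Icc.prod measurableSet_Icc

lemma isCompact_sq : IsCompact usq := isCompact_Icc.prod isCompact_Icc

lemma quad_eq {M N : ℕ} (S : Set (ℝ × ℝ)) (hS : S ⊆ usq)
    (x : Fin M × Fin N → ℂ) :
    star x ⬝ᵥ (prolate2D M N S *ᵥ x) = ((∫ s in S, ‖X2 x s.1 s.2‖ ^ 2 : ℝ) : ℂ) := by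
  have hint : ∀ F : ℝ × ℝ → ℂ, Continuous F → IntegrableOn F S := fun F hF =>
    (hF.continuousOn.integrableOn_compact isCompact_sq).mono_set hS
  have hc := continuous_ee
  rw [← integral_complex_ofReal]
  simp only [dotProduct, mulVec, prolate2D_eq, Pi.star_apply]
  have e : ∀ s : ℝ × ℝ, ((‖X2 x s.1 s.2‖ ^ 2 : ℝ) : ℂ) = ∑ i, ∑ j,
      (starRingEnd ℂ) (x i) * (((starRingEnd ℂ) (ee s.1 ^ (i.1 : ℕ) * ee s.2 ^ (i.2 : ℕ)) *
        (ee s.1 ^ (j.1 : ℕ) * ee s.2 ^ (j.2 : ℕ))) * x j) := by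
    intro s
    push_cast
    rw [← Complex.conj_mul', X2, map_sum, Finset.sum_mul_sum]
    refine Finset.sum_congr rfl fun i _ => Finset.sum_congr rfl fun j _ => ?_
    rw [map_mul]; ring
  simp_rw [e]
  rw [integral_finsetSum _ fun i _ => hint _ (by fun_prop)]
  refine Finset.sum_congr rfl fun i _ => ?_
  rw [integral_finsetSum _ fun i _ => hint _ (by fun_prop), Finset.mul_sum]
  refine Finset.sum_congr rfl fun j _ => ?_
  rw [integral_const_mul, integral_mul_const]
  rfl

lemma int_one (a b : ℕ) : ∫ t in Set.Icc (-(1/2) : ℝ) (1/2),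
    (starRingEnd ℂ) (ee t ^ a) * ee t ^ b = if a = b then 1 else 0 := by
  split_ifs with h
  · subst h
    have : ∀ t, (starRingEnd ℂ) (ee t ^ a) * ee t ^ a = 1 := by
      intro t; rw [map_pow, ← mul_pow, mul_comm, ee_mul_conj, one_pow]
    simp_rw [this]
    simp
    norm_num
  · rw [integral_Icc_eq_integral_Ioc, ← intervalIntegral.integral_of_le (by norm_num)]
    have hc : (2 * (Real.pi : ℂ) * Complex.I * ((a : ℂ) - b)) ≠ 0 := by
      refine mul_ne_zero Complex.two_pi_I_ne_zero (sub_ne_zero.mpr (by exact_mod_cast h))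
    have : ∀ t : ℝ, (starRingEnd ℂ) (ee t ^ a) * ee t ^ b =
        Complex.exp ((2 * (Real.pi : ℂ) * Complex.I * ((a : ℂ) - b)) * t) := by
      intro t; rw [map_pow, conj_ee, ee_pow, ee_pow, ← ee_add, ee]; congr 1; push_cast; ring
    simp_rw [this]
    rw [integral_exp_mul_complex hc, sub_eq_zero.mpr, zero_div]
    rw [Complex.exp_eq_exp_iff_exists_int]
    exact ⟨a - b, by push_cast; ring⟩

lemma prolate_sq (M N : ℕ) : prolate2D M N usq = 1 := by
  ext i j
  rw [prolate2D_eq, Matrix.one_apply, usq, Measure.volume_eq_prod]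
  have e : ∀ s : ℝ × ℝ, (starRingEnd ℂ) (ee s.1 ^ (i.1 : ℕ) * ee s.2 ^ (i.2 : ℕ)) *
        (ee s.1 ^ (j.1 : ℕ) * ee s.2 ^ (j.2 : ℕ)) =
      ((starRingEnd ℂ) (ee s.1 ^ (i.1 : ℕ)) * ee s.1 ^ (j.1 : ℕ)) *
      ((starRingEnd ℂ) (ee s.2 ^ (i.2 : ℕ)) * ee s.2 ^ (j.2 : ℕ)) := by
    intro s; rw [map_mul]; ring
  simp_rw [e]
  rw [setIntegral_prod_mul (fun t => (starRingEnd ℂ) (ee t ^ (i.1 : ℕ)) * ee t ^ (j.1 : ℕ))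
    (fun t => (starRingEnd ℂ) (ee t ^ (i.2 : ℕ)) * ee t ^ (j.2 : ℕ)), int_one, int_one]
  by_cases h1 : i.1 = j.1 <;> by_cases h2 : i.2 = j.2 <;>
    simp [h1, h2, Prod.ext_iff] <;> simp_all [Fin.ext_iff]

lemma volume_sq : volume usq = 1 := by
  rw [usq, Measure.volume_eq_prod, Measure.prod_prod]; norm_num

lemma quad_lower {M N : ℕ} (S : Set (ℝ × ℝ)) (hS : S ⊆ usq) (hSm : MeasurableSet S)
    (x : Fin M × Fin N → ℂ) (D : ℝ)
    (hD : ∀ s ∈ usq \ S, ‖X2 x s.1 s.2‖ ^ 2 ≤ D) (hD0 : 0 ≤ D) :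
    ∑ j, ‖x j‖ ^ 2 - D ≤ (star x ⬝ᵥ (prolate2D M N S *ᵥ x)).re := by
  have hc := continuous_ee
  have hint : IntegrableOn (fun s : ℝ × ℝ => ‖X2 x s.1 s.2‖ ^ 2) usq := by
    refine ContinuousOn.integrableOn_compact isCompact_sq (Continuous.continuousOn ?_)
    unfold X2; fun_prop
  have h1 : (∫ s in usq, ‖X2 x s.1 s.2‖ ^ 2 : ℝ) = ∑ j, ‖x j‖ ^ 2 := by
    have := quad_eq usq subset_rfl x
    rw [prolate_sq, one_mulVec] at this
    have h2 : star x ⬝ᵥ x = ((∑ j, ‖x j‖ ^ 2 : ℝ) : ℂ) := by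
      push_cast
      refine Finset.sum_congr rfl fun j _ => ?_
      rw [← Complex.conj_mul']; rfl
    rw [h2] at this
    exact_mod_cast this.symm
  rw [quad_eq S hS, Complex.ofReal_re, ← h1]
  have h3 := setIntegral_sdiff hSm hint hS
  have hv : volume (usq \ S) ≤ 1 := (measure_mono sdiff_subset).trans volume_sq.le
  have h4 : (∫ s in usq \ S, ‖X2 x s.1 s.2‖ ^ 2 : ℝ) ≤ D := by
    have := norm_setIntegral_le_of_norm_le_const (μ := volume) (s := usq \ S)
      (f := fun s : ℝ × ℝ => ‖X2 x s.1 s.2‖ ^ 2) (C := D) (lt_of_le_of_lt hv ENNReal.one_lt_top)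
      (by intro s hs; rw [Real.norm_of_nonneg (by positivity)]; exact hD s hs)
    refine (le_norm_self _).trans (this.trans ?_)
    refine mul_le_of_le_one_right hD0 ?_
    exact ENNReal.toReal_mono ENNReal.one_ne_top hv
  linarith

lemma quad_upper {ι : Type*} [Fintype ι] [DecidableEq ι] (A : Matrix ι ι ℂ) (hA : A.IsHermitian)
    (x : ι → ℂ) (m : ℝ)
    (h : ∀ i, m < hA.eigenvalues i → ((star (hA.eigenvectorUnitary : Matrix ι ι ℂ)) *ᵥ x) i = 0) :
    (star x ⬝ᵥ (A *ᵥ x)).re ≤ m * ∑ j, ‖x j‖ ^ 2 := by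
  set U : Matrix ι ι ℂ := (hA.eigenvectorUnitary).1 with hU
  have hUU : U * star U = 1 := Unitary.coe_mul_star_self hA.eigenvectorUnitary
  set y := star U *ᵥ x with hy
  have hsp : A = U * diagonal (fun i => (hA.eigenvalues i : ℂ)) * star U := hA.spectral_theorem
  have hn : ∀ z : ι → ℂ, star z ⬝ᵥ z = ((∑ j, ‖z j‖ ^ 2 : ℝ) : ℂ) := by
    intro z
    push_cast
    refine Finset.sum_congr rfl fun j _ => ?_
    rw [← Complex.conj_mul']; rfl
  have hsy : star y = star x ᵥ* U := by
    rw [hy, star_mulVec, star_eq_conjTranspose, conjTranspose_conjTranspose]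
  have h1 : star x ⬝ᵥ (A *ᵥ x) = star y ⬝ᵥ (diagonal (fun i => (hA.eigenvalues i : ℂ)) *ᵥ y) := by
    conv_lhs => rw [hsp]
    rw [hsy, hy, ← mulVec_mulVec, ← mulVec_mulVec, ← dotProduct_mulVec]
  have h2 : ∑ j, ‖y j‖ ^ 2 = ∑ j, ‖x j‖ ^ 2 := by
    have : star y ⬝ᵥ y = star x ⬝ᵥ x := by
      rw [hsy, hy, ← dotProduct_mulVec, mulVec_mulVec, hUU, one_mulVec]
    rw [hn, hn] at this
    exact_mod_cast this
  rw [h1, ← h2, dotProduct, Complex.re_sum, Finset.mul_sum]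
  refine Finset.sum_le_sum fun i _ => ?_
  have h3 : ((star y) i * (diagonal (fun i => (hA.eigenvalues i : ℂ)) *ᵥ y) i).re
      = hA.eigenvalues i * ‖y i‖ ^ 2 := by
    rw [mulVec_diagonal, Pi.star_apply]
    have : star (y i) * ((hA.eigenvalues i : ℂ) * y i)
        = ((hA.eigenvalues i * ‖y i‖ ^ 2 : ℝ) : ℂ) := by
      push_cast
      rw [← Complex.conj_mul']
      simp only [starRingEnd_apply]; ring
    rw [this, Complex.ofReal_re]
  rw [h3]
  by_cases hm : m < hA.eigenvalues i
  · rw [h i hm]; simp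
  · exact mul_le_mul_of_nonneg_right (not_lt.mp hm) (by positivity)

lemma eig_lower {M N : ℕ} (A : Matrix (Fin M × Fin N) (Fin M × Fin N) ℂ) (hA : A.IsHermitian)
    (μ : Fin (M * N) → ℝ) (hμ : Antitone μ) (e : (Fin M × Fin N) ≃ Fin (M * N))
    (he : hA.eigenvalues = μ ∘ e) (p : Fin (M * N)) (M' N' : ℕ) (S : Finset (ℕ × ℕ))
    (hS : S.card + p < M * N) (D : ℝ)
    (hD : ∀ x : Fin M × Fin N → ℂ, (∀ q ∈ S, X2 x (gp M' q.1) (gp N' q.2) = 0) →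
      (1 - D) * ∑ j, ‖x j‖ ^ 2 ≤ (star x ⬝ᵥ (A *ᵥ x)).re) : 1 - D ≤ μ p := by
  set R : Matrix (S ⊕ Fin p) (Fin M × Fin N) ℂ := Matrix.of (Sum.elim
    (fun q j => ee (gp M' q.1.1) ^ (j.1 : ℕ) * ee (gp N' q.1.2) ^ (j.2 : ℕ))
    (fun t j => (star (hA.eigenvectorUnitary).1) (e.symm ⟨t, t.2.trans p.2⟩) j)) with hR
  have hker : LinearMap.ker R.mulVecLin ≠ ⊥ := by
    apply LinearMap.ker_ne_bot_of_finrank_lt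
    simp only [Module.finrank_fintype_fun_eq_card, Fintype.card_sum, Fintype.card_coe,
      Fintype.card_fin, Fintype.card_prod]
    exact hS
  obtain ⟨x, hx, hx0⟩ := Submodule.exists_mem_ne_zero_of_ne_bot hker
  rw [LinearMap.mem_ker, Matrix.mulVecLin_apply] at hx
  have h1 := hD x (by
    intro q hq
    have := congrFun hx (Sum.inl ⟨q, hq⟩)
    simp only [hR, mulVec, dotProduct, Matrix.of_apply, Sum.elim_inl, Pi.zero_apply] at this
    rw [X2, ← this]
    exact Finset.sum_congr rfl fun j _ => mul_comm _ _)
  have h2 := quad_upper A hA x (μ p) (by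
    intro i hi
    rw [he, Function.comp_apply] at hi
    have hlt : e i < p := by
      by_contra hge
      exact absurd (hμ (not_lt.mp hge)) (not_le.mpr hi)
    have := congrFun hx (Sum.inr ⟨e i, hlt⟩)
    simp only [hR, mulVec, dotProduct, Matrix.of_apply, Sum.elim_inr, Pi.zero_apply,
      Fin.eta, Equiv.symm_apply_apply] at this
    exact this)
  have hpos : 0 < ∑ j, ‖x j‖ ^ 2 := by
    obtain ⟨j, hj⟩ := Function.ne_iff.mp hx0
    refine Finset.sum_pos' (fun _ _ => by positivity) ⟨j, Finset.mem_univ _, ?_⟩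
    have : 0 < ‖x j‖ := norm_pos_iff.mpr hj
    positivity
  exact le_of_mul_le_mul_right (h1.trans h2) hpos

noncomputable def gset (M' : ℕ) (a b : ℝ) : Finset ℕ := by
  classical exact (Finset.range M').filter fun k => a ≤ gp M' k ∧ gp M' k ≤ b

lemma mem_gset {M' k : ℕ} {a b : ℝ} :
    k ∈ gset M' a b ↔ k < M' ∧ a ≤ gp M' k ∧ gp M' k ≤ b := by
  classical
  simp [gset]

lemma grid_count (M' : ℕ) (a b : ℝ) (hM : 0 < M') (ha : -(1/2) ≤ a) (hb : b < 1 / 2) :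
    M' * (b - a) - 1 ≤ ((gset M' a b).card : ℝ) := by
  have hM' : (0 : ℝ) < M' := by exact_mod_cast hM
  have hA0 : 0 ≤ M' * (a + 1/2) := mul_nonneg hM'.le (by linarith)
  rcases lt_or_ge (M' * (b + 1/2)) 0 with hB | hB
  · have : (0 : ℝ) ≤ ((gset M' a b).card : ℝ) := by positivity
    nlinarith
  · have hsub : Finset.Icc ⌈M' * (a + 1/2)⌉₊ ⌊M' * (b + 1/2)⌋₊ ⊆ gset M' a b := by
      intro k hk
      rw [Finset.mem_Icc, Nat.ceil_le, Nat.le_floor_iff hB] at hk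
      rw [mem_gset]
      have h1 : (k : ℝ) / M' ≤ b + 1/2 := by rw [div_le_iff₀ hM']; linarith
      have h2 : a + 1/2 ≤ (k : ℝ) / M' := by rw [le_div_iff₀ hM']; linarith
      refine ⟨?_, ?_, ?_⟩
      · have : (k : ℝ) < M' := by nlinarith
        exact_mod_cast this
      · unfold gp; linarith
      · unfold gp; linarith
    have h := Finset.card_le_card hsub
    rw [Nat.card_Icc] at h
    have h1 := Nat.ceil_lt_add_one hA0
    have h2 := Nat.lt_floor_add_one (M' * (b + 1/2))
    have h3 : ⌊M' * (b + 1/2)⌋₊ + 1 ≤ (gset M' a b).card + ⌈M' * (a + 1/2)⌉₊ := by omega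
    have h4 : (⌊M' * (b + 1/2)⌋₊ : ℝ) + 1 ≤ (gset M' a b).card + ⌈M' * (a + 1/2)⌉₊ := by
      exact_mod_cast h3
    nlinarith

lemma prod_count (a b α β c d : ℝ) (ha : 0 ≤ a) (hb : 0 ≤ b) (hα : 0 ≤ α) (hβ : 0 ≤ β)
    (hc : 0 ≤ c) (hd : 0 ≤ d) (h1 : a - α ≤ c) (h2 : b - β ≤ d) :
    a * b - α * b - β * a ≤ c * d := by
  have hcd := mul_nonneg hc hd
  rcases le_or_gt a α with h | h
  · nlinarith [mul_nonneg (sub_nonneg.mpr h) hb, mul_nonneg hβ ha]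
  · rcases le_or_gt b β with h' | h'
    · nlinarith [mul_nonneg (sub_nonneg.mpr h') ha, mul_nonneg hα hb]
    · have := mul_le_mul h1 h2 (by linarith) hc
      nlinarith [mul_nonneg hα hβ]

lemma rect_bounds {f0 f1 W0 W1 : ℝ} (h0 : 0 < W0) (h1 : 0 < W1)
    (hsub : rect2 f0 f1 W0 W1 ⊆
      Set.Icc (-(1 / 2) : ℝ) (1 / 2) ×ˢ Set.Icc (-(1 / 2) : ℝ) (1 / 2)) :
    (-(1/2) ≤ f0 - W0 ∧ f0 + W0 ≤ 1/2) ∧ (-(1/2) ≤ f1 - W1 ∧ f1 + W1 ≤ 1/2) := by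
  have a := @hsub (f0 - W0, f1 - W1)
    ⟨⟨le_refl _, by simp only; linarith⟩, ⟨le_refl _, by simp only; linarith⟩⟩
  have b := @hsub (f0 + W0, f1 + W1)
    ⟨⟨by simp only; linarith, le_refl _⟩, ⟨by simp only; linarith, le_refl _⟩⟩
  exact ⟨⟨a.1.1, b.1.2⟩, ⟨a.2.1, b.2.2⟩⟩

lemma sc_far (M' K : ℕ) (hM : 0 < M') (x0 r u v : ℝ) (k : ℕ) (hr : 0 < r) (hr2 : r < 1 / 2)
    (hk : k ∈ gset M' (u + r) (v - r)) (hu : -(1/2) ≤ u) (hv : v ≤ 1/2)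
    (hx : x0 ∈ Set.Icc (-(1/2) : ℝ) (1/2)) (hx' : x0 ∉ Set.Icc u v) :
    ‖sc M' K x0 k‖ ≤ Real.cos (Real.pi * r) ^ K := by
  rw [mem_gset] at hk
  obtain ⟨_, hk1, hk2⟩ := hk
  obtain ⟨hx1, hx2⟩ := hx
  apply norm_sc_small M' K hM x0 r k hr hr2
  · rw [Set.mem_Icc, not_and_or, not_le, not_le] at hx'
    rw [le_abs]
    rcases hx' with h | h
    · left; linarith
    · right; linarith
  · rw [abs_le]; constructor <;> linarith

/-- decay bound for powers -/
lemma pow_decay (ρ η : ℝ) (hρ : 0 < ρ) (hρ1 : ρ < 1) (hη : 0 ≤ η) (M : ℕ) (m : ℝ)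
    (hm : m ≤ M) :
    ρ ^ ⌊η * M⌋₊ ≤ ρ⁻¹ * Real.exp (-(η * -Real.log ρ) * m) := by
  have h1 := Nat.lt_floor_add_one (η * (M : ℝ))
  have hl : Real.log ρ < 0 := Real.log_neg hρ hρ1
  have h2 : ρ ^ ⌊η * M⌋₊ = Real.exp (Real.log ρ * ⌊η * M⌋₊) := by
    rw [← Real.rpow_natCast, Real.rpow_def_of_pos hρ]
  have h3 : ρ⁻¹ = Real.exp (-Real.log ρ) := by rw [Real.exp_neg, Real.exp_log hρ]
  rw [h2, h3, ← Real.exp_add]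
  apply Real.exp_le_exp.mpr
  have h4 : η * m ≤ η * M := mul_le_mul_of_nonneg_left hm hη
  nlinarith

lemma coarse (M K W r f M' C : ℝ) (hM' : M' = M + K) (hM : 0 ≤ M) (hK : 0 ≤ K) (hC : 0 ≤ C)
    (c1 : M' * (f + W - r - (f - W + r)) - 1 ≤ C) :
    2 * W * M - (2 * r * M + 1) ≤ C := by
  subst hM'
  rcases le_or_gt W r with h | h
  · have := mul_nonneg hM (sub_nonneg.mpr h)
    linarith
  · have := mul_nonneg hK (sub_nonneg.mpr h.le)
    linarith

set_option maxHeartbeats 2000000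

theorem cubic_multiband_cluster_near_one
    (J : ℕ) (hJ : 1 ≤ J) (f0 f1 W0 W1 : Fin J → ℝ)
    (hW0 : ∀ i, W0 i ∈ Set.Ioo (0 : ℝ) (1 / 2)) (hW1 : ∀ i, W1 i ∈ Set.Ioo (0 : ℝ) (1 / 2))
    (hsub : ∀ i, rect2 (f0 i) (f1 i) (W0 i) (W1 i) ⊆
      Set.Icc (-(1 / 2) : ℝ) (1 / 2) ×ˢ Set.Icc (-(1 / 2) : ℝ) (1 / 2))
    (hdisj : ∀ i j, i ≠ j →
      Disjoint (rect2 (f0 i) (f1 i) (W0 i) (W1 i)) (rect2 (f0 j) (f1 j) (W0 j) (W1 j)))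
    (ε : ℝ) (hε : ε ∈ Set.Ioo (0 : ℝ) 1) :
    ∃ (C₅ c : ℝ) (Mtil₁ Ntil₁ : ℕ), 0 < C₅ ∧ 0 < c ∧ 1 ≤ Mtil₁ ∧ 1 ≤ Ntil₁ ∧
      ∀ (M N : ℕ), Mtil₁ ≤ M → Ntil₁ ≤ N →
        ∀ (hA : (prolate2D M N (⋃ i, rect2 (f0 i) (f1 i) (W0 i) (W1 i))).IsHermitian)
          (μ : Fin (M * N) → ℝ), Antitone μ →
          (∃ e : (Fin M × Fin N) ≃ Fin (M * N), hA.eigenvalues = μ ∘ e) →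
          ∀ p : Fin (M * N),
            (p : ℕ) ≤ J - 1 + ⌊(M : ℝ) * (N : ℝ) * (∑ i, 4 * W0 i * W1 i) * (1 - ε)⌋₊ →
            1 - 6 * (M : ℝ) ^ 2 * (N : ℝ) ^ 2 * C₅ * Real.exp (-c * min (M : ℝ) (N : ℝ))
              ≤ μ p := by
  classical
  obtain ⟨hε0, hε1⟩ := hε
  set ω := ∑ i, 4 * W0 i * W1 i with hω
  have hJ0 : (0 : ℝ) < J := by exact_mod_cast hJ
  have hωpos : 0 < ω := by
    refine Finset.sum_pos (fun i _ => ?_) ⟨⟨0, hJ⟩, Finset.mem_univ _⟩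
    have := (hW0 i).1; have := (hW1 i).1; positivity
  have hωε : 0 < ω * ε := mul_pos hωpos hε0
  set η := min 1 (ω * ε / 12) with hη
  have hη0 : 0 < η := lt_min one_pos (by positivity)
  have hη1 : η ≤ 1 := min_le_left _ _
  have hη2 : η ≤ ω * ε / 12 := min_le_right _ _
  set r := min (1/4) (ω * ε / (16 * J)) with hr
  have hr0 : 0 < r := lt_min (by norm_num) (by positivity)
  have hr1 : r < 1/2 := lt_of_le_of_lt (min_le_left _ _) (by norm_num)
  have hr2 : J * r ≤ ω * ε / 16 := by
    have : r ≤ ω * ε / (16 * J) := min_le_right _ _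
    rw [le_div_iff₀ (by positivity)] at this
    linarith
  set ρ := Real.cos (Real.pi * r) with hρ
  have hpi := Real.pi_pos
  have hρ0 : 0 < ρ := Real.cos_pos_of_mem_Ioo ⟨by nlinarith, by nlinarith⟩
  have hρ1 : ρ < 1 := by
    have := Real.cos_lt_cos_of_nonneg_of_le_pi (x := 0) (y := Real.pi * r) le_rfl
      (by nlinarith) (by positivity)
    rwa [Real.cos_zero] at this
  have hlog : Real.log ρ < 0 := Real.log_neg hρ0 hρ1
  set c := η * -Real.log ρ with hc
  have hc0 : 0 < c := mul_pos hη0 (by linarith)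
  set T := ⌈6 * J / (ω * ε)⌉₊ + 1 with hT
  have hT1 : 6 * J / (ω * ε) ≤ (T : ℝ) := by
    rw [hT]; push_cast
    linarith [Nat.le_ceil (6 * J / (ω * ε))]
  rw [div_le_iff₀ hωε] at hT1
  refine ⟨3 * (ρ⁻¹) ^ 2, 2 * c, T, T, by positivity, by positivity, by omega, by omega, ?_⟩
  rintro M N hM hN hA μ hμ ⟨e, he⟩ p hp
  have hMT : (T : ℝ) ≤ M := by exact_mod_cast hM
  have hNT : (T : ℝ) ≤ N := by exact_mod_cast hN
  have hM1 : (1 : ℝ) ≤ M := by exact_mod_cast (show 1 ≤ M by omega)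
  have hN1 : (1 : ℝ) ≤ N := by exact_mod_cast (show 1 ≤ N by omega)
  set K := ⌊η * M⌋₊ with hK
  set K' := ⌊η * N⌋₊ with hK'
  have hKle : (K : ℝ) ≤ η * M := Nat.floor_le (by positivity)
  have hKle' : (K' : ℝ) ≤ η * N := Nat.floor_le (by positivity)
  set M' := M + K with hM'
  set N' := N + K' with hN'
  have hM'0 : 0 < M' := by omega
  have hN'0 : 0 < N' := by omega
  have hM'r : (M' : ℝ) = M + K := by rw [hM']; push_cast; rfl
  have hN'r : (N' : ℝ) = N + K' := by rw [hN']; push_cast; rfl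
  have hKnn : (0 : ℝ) ≤ K := by positivity
  have hKnn' : (0 : ℝ) ≤ K' := by positivity
  have hB := fun i => rect_bounds (hW0 i).1 (hW1 i).1 (hsub i)
  set G : Fin J → Finset (ℕ × ℕ) := fun i =>
    gset M' (f0 i - W0 i + r) (f0 i + W0 i - r) ×ˢ
      gset N' (f1 i - W1 i + r) (f1 i + W1 i - r) with hG
  set good := Finset.univ.biUnion G with hgood
  have hgsub : good ⊆ Finset.range M' ×ˢ Finset.range N' := by
    intro q hq
    simp only [hgood, hG, Finset.mem_biUnion, Finset.mem_product, mem_gset] at hq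
    obtain ⟨i, _, h1, h2⟩ := hq
    simp only [Finset.mem_product, Finset.mem_range]
    exact ⟨h1.1, h2.1⟩
  have hcard : good.card = ∑ i, (G i).card := by
    refine Finset.card_biUnion fun i _ j _ hij => ?_
    show Disjoint (G i) (G j)
    rw [Finset.disjoint_left]
    intro q hqi hqj
    simp only [hG, Finset.mem_product, mem_gset] at hqi hqj
    have hdl := Set.disjoint_left.mp (hdisj i j hij)
    refine @hdl (gp M' q.1, gp N' q.2) ?_ ?_
    · exact ⟨⟨by simp only; linarith [hqi.1.2.1], by simp only; linarith [hqi.1.2.2]⟩,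
        ⟨by simp only; linarith [hqi.2.2.1], by simp only; linarith [hqi.2.2.2]⟩⟩
    · exact ⟨⟨by simp only; linarith [hqj.1.2.1], by simp only; linarith [hqj.1.2.2]⟩,
        ⟨by simp only; linarith [hqj.2.2.1], by simp only; linarith [hqj.2.2.2]⟩⟩
  have hGi : ∀ i, (M : ℝ) * N * (4 * W0 i * W1 i) - (4 * r * M * N + M + N) ≤ (G i).card := by
    intro i
    obtain ⟨⟨b1, b2⟩, b3, b4⟩ := hB i
    have w0 := (hW0 i).1
    have w1 := (hW1 i).1
    have w0' := (hW0 i).2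
    have w1' := (hW1 i).2
    have c1 := grid_count M' (f0 i - W0 i + r) (f0 i + W0 i - r) hM'0 (by linarith) (by linarith)
    have c2 := grid_count N' (f1 i - W1 i + r) (f1 i + W1 i - r) hN'0 (by linarith) (by linarith)
    have n1 : (0 : ℝ) ≤ (gset M' (f0 i - W0 i + r) (f0 i + W0 i - r)).card := by positivity
    have n2 : (0 : ℝ) ≤ (gset N' (f1 i - W1 i + r) (f1 i + W1 i - r)).card := by positivity
    have hcG : ((G i).card : ℝ) = (gset M' (f0 i - W0 i + r) (f0 i + W0 i - r)).card *
        (gset N' (f1 i - W1 i + r) (f1 i + W1 i - r)).card := by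
      rw [hG]; simp only [Finset.card_product]; push_cast; rfl
    rw [hcG]
    -- pass from the fine grid to the bound in terms of the coarse sizes
    have d1 : 2 * W0 i * M - (2 * r * M + 1) ≤
        (gset M' (f0 i - W0 i + r) (f0 i + W0 i - r)).card :=
      coarse M _ (W0 i) r (f0 i) M' _ hM'r (by positivity) hKnn n1 c1
    have d2 : 2 * W1 i * N - (2 * r * N + 1) ≤
        (gset N' (f1 i - W1 i + r) (f1 i + W1 i - r)).card :=
      coarse N _ (W1 i) r (f1 i) N' _ hN'r (by positivity) hKnn' n2 c2
    have hpc := prod_count (2 * W0 i * M) (2 * W1 i * N) (2 * r * M + 1) (2 * r * N + 1) _ _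
      (by positivity) (by positivity) (by positivity) (by positivity) n1 n2 d1 d2
    refine le_trans ?_ hpc
    have k1 : (2 * r * M + 1) * (2 * W1 i * N) ≤ (2 * r * M + 1) * N :=
      mul_le_mul_of_nonneg_left (mul_le_of_le_one_left (by positivity) (by linarith)) (by positivity)
    have k2 : (2 * r * N + 1) * (2 * W0 i * M) ≤ (2 * r * N + 1) * M :=
      mul_le_mul_of_nonneg_left (mul_le_of_le_one_left (by positivity) (by linarith)) (by positivity)
    linarith
  have hGtot : (M : ℝ) * N * ω - J * (4 * r * M * N + M + N) ≤ good.card := by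
    rw [hcard]; push_cast
    refine le_trans (le_of_eq ?_) (Finset.sum_le_sum fun i _ => hGi i)
    rw [Finset.sum_sub_distrib, ← Finset.mul_sum, Finset.sum_const, Finset.card_univ,
      Fintype.card_fin, nsmul_eq_mul]
  set S := (Finset.range M' ×ˢ Finset.range N') \ good with hS
  have hScard : (S.card : ℝ) = M' * N' - good.card := by
    have := Finset.card_sdiff_add_card_eq_card hgsub
    rw [Finset.card_product, Finset.card_range, Finset.card_range] at this
    have h2 : (S.card : ℝ) + good.card = M' * N' := by exact_mod_cast this
    linarith
  have hMN : (0 : ℝ) < (M : ℝ) * N := by positivity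
  have hM'le : (M' : ℝ) ≤ (1 + η) * M := by rw [hM'r]; linarith
  have hN'le : (N' : ℝ) ≤ (1 + η) * N := by rw [hN'r]; linarith
  have hM'N' : (M' : ℝ) * N' ≤ (1 + 3 * η) * (M * N) := by
    have h1 : (M' : ℝ) * N' ≤ ((1 + η) * M) * ((1 + η) * N) :=
      mul_le_mul hM'le hN'le (by positivity) (by positivity)
    have h2 : η * η ≤ η := mul_le_of_le_one_left hη0.le hη1
    have h3 := mul_le_mul_of_nonneg_right h2 hMN.le
    linarith
  have hdim : S.card + p < M * N := by
    have hfl : (⌊(M : ℝ) * N * ω * (1 - ε)⌋₊ : ℝ) ≤ M * N * ω * (1 - ε) :=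
      Nat.floor_le (mul_nonneg (by positivity) (by linarith))
    have hp' : (p : ℕ) + 1 ≤ J + ⌊(M : ℝ) * N * ω * (1 - ε)⌋₊ := by omega
    have hp2 : ((p : ℕ) : ℝ) + 1 ≤ J + ⌊(M : ℝ) * N * ω * (1 - ε)⌋₊ := by exact_mod_cast hp'
    have t1 : 6 * (J : ℝ) * M ≤ M * N * (ω * ε) := by
      have : 6 * (J : ℝ) ≤ N * (ω * ε) :=
        hT1.trans (mul_le_mul_of_nonneg_right hNT hωε.le)
      have := mul_le_mul_of_nonneg_right this (show (0 : ℝ) ≤ M by positivity)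
      linarith
    have t2 : 6 * (J : ℝ) * N ≤ M * N * (ω * ε) := by
      have : 6 * (J : ℝ) ≤ M * (ω * ε) :=
        hT1.trans (mul_le_mul_of_nonneg_right hMT hωε.le)
      have := mul_le_mul_of_nonneg_right this (show (0 : ℝ) ≤ N by positivity)
      linarith
    have t3 : (J : ℝ) ≤ J * M := le_mul_of_one_le_right hJ0.le hM1
    have t4 : 3 * η * (M * N) ≤ (ω * ε / 4) * (M * N) :=
      mul_le_mul_of_nonneg_right (by linarith) hMN.le
    have t5 : (4 * (J * r)) * (M * N) ≤ (ω * ε / 4) * (M * N) :=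
      mul_le_mul_of_nonneg_right (by linarith) hMN.le
    have : (S.card : ℝ) + (p : ℕ) < M * N := by
      rw [hScard]; linarith
    exact_mod_cast this
  set δ := ρ⁻¹ * Real.exp (-c * min (M : ℝ) N) with hδ
  have hδ0 : 0 ≤ δ := by positivity
  have hUm : MeasurableSet (⋃ i, rect2 (f0 i) (f1 i) (W0 i) (W1 i)) :=
    MeasurableSet.iUnion fun i => measurableSet_Icc.prod measurableSet_Icc
  have main := eig_lower _ hA μ hμ e he p M' N' S hdim (δ ^ 2 * (M' * N') ^ 2) (by
    intro x hx
    have := quad_lower (⋃ i, rect2 (f0 i) (f1 i) (W0 i) (W1 i)) (Set.iUnion_subset hsub) hUm x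
      (δ ^ 2 * (M' * N') ^ 2 * ∑ j, ‖x j‖ ^ 2) (by
        rintro ⟨s, t⟩ ⟨⟨hs, ht⟩, hst⟩
        refine X2_small M' N' K K' le_rfl le_rfl x s t δ good hx hgsub ?_
        intro q hq
        simp only [hgood, hG, Finset.mem_biUnion, Finset.mem_product] at hq
        obtain ⟨i, _, h1, h2⟩ := hq
        obtain ⟨⟨b1, b2⟩, b3, b4⟩ := hB i
        rw [norm_mul]
        have hni : (s, t) ∉ rect2 (f0 i) (f1 i) (W0 i) (W1 i) := fun h =>
          hst (Set.mem_iUnion.mpr ⟨i, h⟩)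
        by_cases hsi : s ∈ Set.Icc (f0 i - W0 i) (f0 i + W0 i)
        · have hti : t ∉ Set.Icc (f1 i - W1 i) (f1 i + W1 i) := fun h => hni ⟨hsi, h⟩
          have := sc_far N' K' hN'0 t r _ _ q.2 hr0 hr1 h2 b3 b4 ht hti
          refine (mul_le_of_le_one_left (norm_nonneg _) (norm_sc_le_one M' K hM'0 s q.1)).trans
            (this.trans ?_)
          exact pow_decay ρ η hρ0 hρ1 hη0.le N _ (min_le_right _ _)
        · have := sc_far M' K hM'0 s r _ _ q.1 hr0 hr1 h1 b1 b2 hs hsi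
          refine (mul_le_of_le_one_right (norm_nonneg _) (norm_sc_le_one N' K' hN'0 t q.2)).trans
            (this.trans ?_)
          exact pow_decay ρ η hρ0 hρ1 hη0.le M _ (min_le_left _ _))
      (by positivity)
    linarith)
  refine le_trans ?_ main
  have hexp : δ ^ 2 = (ρ⁻¹) ^ 2 * Real.exp (-(2 * c) * min (M : ℝ) N) := by
    rw [hδ, mul_pow, ← Real.exp_nat_mul]; congr 2; push_cast; ring
  have hsq : ((M' : ℝ) * N') ^ 2 ≤ 16 * (M ^ 2 * N ^ 2) := by
    have : (M' : ℝ) * N' ≤ 4 * (M * N) :=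
      hM'N'.trans (mul_le_mul_of_nonneg_right (by linarith) hMN.le)
    calc ((M' : ℝ) * N') ^ 2 ≤ (4 * (M * N)) ^ 2 := pow_le_pow_left₀ (by positivity) this 2
      _ = _ := by ring
  have h1 : δ ^ 2 * (M' * N') ^ 2 ≤ δ ^ 2 * (18 * (M ^ 2 * N ^ 2)) :=
    mul_le_mul_of_nonneg_left (hsq.trans (by linarith [show (0:ℝ) ≤ (M:ℝ)^2 * N^2 by positivity]))
      (by positivity)
  have h2 : 6 * (M : ℝ) ^ 2 * (N : ℝ) ^ 2 * (3 * (ρ⁻¹) ^ 2) *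
      Real.exp (-(2 * c) * min (M : ℝ) N) = δ ^ 2 * (18 * (M ^ 2 * N ^ 2)) := by
    rw [hexp]; ring
  rw [h2]
  linarith
end

section
/- Let M, N ≥ 1 and let 𝕊, 𝕋 ⊆ [−1/2, 1/2]² be disjoint measurable sets. If v ∈ ℂ^{MN} is a unit eigenvector of B_{(M,N),𝕊} with eigenvalue λ, then ‖B_{(M,N),𝕋}·v‖² ≤ 1 − λ², where ‖·‖ is the Euclidean norm on ℂ^{MN}. -/
open MeasureTheory Matrix Real Set

/-- The exponential `exp(-2πi (f j₁ + g j₂))`. -/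
noncomputable def pE {M N : ℕ} (j : Fin M × Fin N) (x : ℝ × ℝ) : ℂ :=
  Complex.exp (-(2 * (Real.pi : ℂ) * Complex.I *
      ((x.1 : ℂ) * ((j.1 : ℕ) : ℂ) + (x.2 : ℂ) * ((j.2 : ℕ) : ℂ))))

/-- The trigonometric polynomial attached to a vector. -/
noncomputable def pF {M N : ℕ} (u : Fin M × Fin N → ℂ) (x : ℝ × ℝ) : ℂ := ∑ j, u j * pE j x

lemma pE_cont {M N : ℕ} (j : Fin M × Fin N) : Continuous (pE j) := by
  unfold pE; fun_prop

lemma pF_cont {M N : ℕ} (u : Fin M × Fin N → ℂ) : Continuous (pF u) := by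
  unfold pF
  exact continuous_finsetSum _ fun j _ => continuous_const.mul (pE_cont j)

/-- The unit box. -/
def pBox : Set (ℝ × ℝ) := Set.Icc (-(1 / 2) : ℝ) (1 / 2) ×ˢ Set.Icc (-(1 / 2) : ℝ) (1 / 2)

lemma pBox_compact : IsCompact pBox := isCompact_Icc.prod isCompact_Icc

lemma pInt {E : Type*} [NormedAddCommGroup E] {W : Set (ℝ × ℝ)} (hW : W ⊆ pBox) {h : ℝ × ℝ → E}
    (hc : Continuous h) : IntegrableOn h W :=
  (hc.continuousOn.integrableOn_compact pBox_compact).mono_set hW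

lemma pKernel {M N : ℕ} (i j : Fin M × Fin N) (x : ℝ × ℝ) :
    Complex.exp (2 * (Real.pi : ℂ) * Complex.I *
      ((x.1 : ℂ) * (((i.1 : ℕ) : ℂ) - ((j.1 : ℕ) : ℂ)) +
       (x.2 : ℂ) * (((i.2 : ℕ) : ℂ) - ((j.2 : ℕ) : ℂ)))) =
    (starRingEnd ℂ) (pE i x) * pE j x := by
  unfold pE
  rw [← Complex.exp_conj, ← Complex.exp_add]
  congr 1
  simp only [map_neg, map_mul, map_add, Complex.conj_ofReal, Complex.conj_I, map_natCast,
    map_ofNat]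
  ring

lemma pForm {M N : ℕ} {W : Set (ℝ × ℝ)} (hW : W ⊆ pBox) (u v : Fin M × Fin N → ℂ) :
    ∑ i, (starRingEnd ℂ) (u i) * (prolate2D M N W).mulVec v i =
      ∫ x in W, (starRingEnd ℂ) (pF u x) * pF v x := by
  have hI : ∀ i j : Fin M × Fin N, Integrable
      (fun x => (starRingEnd ℂ) (u i * pE i x) * (v j * pE j x)) (volume.restrict W) := by
    intro i j
    apply pInt hW
    exact (Complex.continuous_conj.comp (continuous_const.mul (pE_cont i))).mul
      (continuous_const.mul (pE_cont j))
  have : ∀ x, (starRingEnd ℂ) (pF u x) * pF v x =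
      ∑ i, ∑ j, (starRingEnd ℂ) (u i * pE i x) * (v j * pE j x) := by
    intro x
    simp only [pF, map_sum, Finset.sum_mul_sum]
  simp only [this]
  rw [integral_finsetSum _ fun i _ => integrable_finsetSum _ fun j _ => hI i j]
  refine Finset.sum_congr rfl fun i _ => ?_
  rw [integral_finsetSum _ fun j _ => hI i j]
  simp only [Matrix.mulVec, dotProduct, Finset.mul_sum]
  refine Finset.sum_congr rfl fun j _ => ?_
  simp only [prolate2D, pKernel]
  rw [← integral_mul_const, ← integral_const_mul]
  congr 1
  funext x
  simp only [map_mul]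
  ring

lemma pOrth (a b : ℕ) :
    ∫ f in Set.Icc (-(1 / 2) : ℝ) (1 / 2),
      Complex.exp (2 * (Real.pi : ℂ) * Complex.I * ((f : ℂ) * ((a : ℂ) - (b : ℂ)))) =
    if a = b then 1 else 0 := by
  rw [integral_Icc_eq_integral_Ioc, ← intervalIntegral.integral_of_le (by norm_num)]
  split_ifs with h
  · subst h
    simp
    norm_num
  · have hab : (a : ℂ) - (b : ℂ) ≠ 0 := sub_ne_zero.mpr (by exact_mod_cast h)
    have hc : 2 * (Real.pi : ℂ) * Complex.I * ((a : ℂ) - (b : ℂ)) ≠ 0 :=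
      mul_ne_zero Complex.two_pi_I_ne_zero hab
    have e : ∀ f : ℝ, 2 * (Real.pi : ℂ) * Complex.I * ((f : ℂ) * ((a : ℂ) - (b : ℂ))) =
        (2 * (Real.pi : ℂ) * Complex.I * ((a : ℂ) - (b : ℂ))) * (f : ℂ) := fun f => by ring
    simp only [e]
    rw [integral_exp_mul_complex hc, div_eq_zero_iff]
    left
    rw [sub_eq_zero, Complex.exp_eq_exp_iff_exists_int]
    refine ⟨(a : ℤ) - b, ?_⟩
    push_cast
    ring

lemma pBoxMat (M N : ℕ) : prolate2D M N pBox = 1 := by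
  ext i j
  simp only [prolate2D, pBox, mul_add, Complex.exp_add]
  rw [Measure.volume_eq_prod, setIntegral_prod_mul
    (fun f : ℝ => Complex.exp (2 * (Real.pi : ℂ) * Complex.I *
      ((f : ℂ) * (((i.1 : ℕ) : ℂ) - ((j.1 : ℕ) : ℂ)))))
    (fun f : ℝ => Complex.exp (2 * (Real.pi : ℂ) * Complex.I *
      ((f : ℂ) * (((i.2 : ℕ) : ℂ) - ((j.2 : ℕ) : ℂ))))), pOrth, pOrth, Matrix.one_apply]
  simp only [Prod.ext_iff, Fin.ext_iff]
  split_ifs <;> simp_all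

lemma pQuad {M N : ℕ} {W : Set (ℝ × ℝ)} (hW : W ⊆ pBox) (u : Fin M × Fin N → ℂ) :
    ∑ i, (starRingEnd ℂ) (u i) * (prolate2D M N W).mulVec u i =
      ((∫ x in W, ‖pF u x‖ ^ 2 : ℝ) : ℂ) := by
  rw [pForm hW, ← integral_complex_ofReal]
  congr 1
  funext x
  rw [Complex.conj_mul']
  push_cast
  rfl

lemma pParseval {M N : ℕ} (u : Fin M × Fin N → ℂ) :
    ∫ x in pBox, ‖pF u x‖ ^ 2 = ∑ i, ‖u i‖ ^ 2 := by
  have h := pQuad (Subset.refl pBox) u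
  rw [pBoxMat, Matrix.one_mulVec] at h
  simp only [Complex.conj_mul'] at h
  exact_mod_cast h.symm

theorem prolate2D_disjoint_band_energy_bound
    (M N : ℕ) (hM : 1 ≤ M) (hN : 1 ≤ N)
    (S T : Set (ℝ × ℝ)) (hSmeas : MeasurableSet S) (hTmeas : MeasurableSet T)
    (hSsub : S ⊆ Set.Icc (-(1 / 2) : ℝ) (1 / 2) ×ˢ Set.Icc (-(1 / 2) : ℝ) (1 / 2))
    (hTsub : T ⊆ Set.Icc (-(1 / 2) : ℝ) (1 / 2) ×ˢ Set.Icc (-(1 / 2) : ℝ) (1 / 2))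
    (hdisj : Disjoint S T)
    (v : Fin M × Fin N → ℂ) (hunit : ∑ i, ‖v i‖ ^ 2 = 1)
    (lam : ℝ) (heig : (prolate2D M N S).mulVec v = (lam : ℂ) • v) :
    ∑ i, ‖(prolate2D M N T).mulVec v i‖ ^ 2 ≤ 1 - lam ^ 2 := by
  have hS : S ⊆ pBox := hSsub
  have hT : T ⊆ pBox := hTsub
  have hc : ∀ u : Fin M × Fin N → ℂ, Continuous fun x => ‖pF u x‖ ^ 2 :=
    fun u => (pF_cont u).norm.pow 2
  have hmono : ∀ (W : Set (ℝ × ℝ)), W ⊆ pBox → ∀ u : Fin M × Fin N → ℂ,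
      ∫ x in W, ‖pF u x‖ ^ 2 ≤ ∑ i, ‖u i‖ ^ 2 := by
    intro W hW u
    rw [← pParseval]
    exact setIntegral_mono_set (pInt (Subset.refl _) (hc u))
      (Filter.Eventually.of_forall fun x => by positivity) hW.eventuallyLE
  have hlam : ∫ x in S, ‖pF v x‖ ^ 2 = lam := by
    have h := pQuad hS v
    rw [heig] at h
    have h2 : ∑ i, (starRingEnd ℂ) (v i) * ((lam : ℂ) • v) i =
        ((lam * ∑ i, ‖v i‖ ^ 2 : ℝ) : ℂ) := by
      push_cast
      rw [Finset.mul_sum]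
      refine Finset.sum_congr rfl fun i _ => ?_
      rw [← Complex.conj_mul', Pi.smul_apply, smul_eq_mul]
      ring
    rw [h2, hunit, mul_one] at h
    exact_mod_cast h.symm
  have hlam0 : 0 ≤ lam := by
    rw [← hlam]
    exact integral_nonneg fun x => by positivity
  have hsum : (∫ x in S, ‖pF v x‖ ^ 2) + ∫ x in T, ‖pF v x‖ ^ 2 ≤ 1 := by
    rw [← setIntegral_union hdisj hTmeas (pInt hS (hc v)) (pInt hT (hc v)), ← hunit]
    exact hmono _ (union_subset hS hT) v
  have hT0 : 0 ≤ ∫ x in T, ‖pF v x‖ ^ 2 := integral_nonneg fun x => by positivity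
  set w := (prolate2D M N T).mulVec v with hw
  have hcross : 2 * ∑ i, ‖w i‖ ^ 2 ≤ (∫ x in T, ‖pF w x‖ ^ 2) + ∫ x in T, ‖pF v x‖ ^ 2 := by
    have h := pForm hT w v
    rw [← hw] at h
    simp only [Complex.conj_mul'] at h
    have h1 : ∑ i, ‖w i‖ ^ 2 = ‖∫ x in T, (starRingEnd ℂ) (pF w x) * pF v x‖ := by
      rw [← h]
      have : ∑ i, (‖w i‖ : ℂ) ^ 2 = ((∑ i, ‖w i‖ ^ 2 : ℝ) : ℂ) := by push_cast; rfl
      rw [this, Complex.norm_real, Real.norm_of_nonneg (by positivity)]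
    have h2 : ‖∫ x in T, (starRingEnd ℂ) (pF w x) * pF v x‖ ≤
        ∫ x in T, (‖pF w x‖ ^ 2 + ‖pF v x‖ ^ 2) / 2 := by
      apply norm_integral_le_of_norm_le
      · exact pInt hT (((hc w).add (hc v)).div_const 2)
      · refine Filter.Eventually.of_forall fun x => ?_
        rw [norm_mul, RCLike.norm_conj]
        nlinarith [sq_nonneg (‖pF w x‖ - ‖pF v x‖)]
    rw [integral_div, integral_add (pInt hT (hc w)) (pInt hT (hc v))] at h2
    rw [h1]
    linarith
  have := hmono T hT w
  nlinarith
end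

section
/- Let [f₁ − W₁, f₁ + W₁] and [f₂ − W₂, f₂ + W₂] be two disjoint closed subintervals of [−1/2, 1/2] with W₁, W₂ ∈ (0, 1/2), and fix ε ∈ (0, 1). Then there exists an integer Ñ₁ ≥ 1 (depending only on the two intervals and ε) such that for every N ≥ Ñ₁ the following holds: if s₁ is a unit eigenvector of B_{N,[f₁−W₁,f₁+W₁]} corresponding to its l₁-th largest eigenvalue λ₁ with 0 ≤ l₁ ≤ ⌊2NW₁(1−ε)⌋ − 1, and s₂ is a unit eigenvector of B_{N,[f₂−W₂,f₂+W₂]} corresponding to its l₂-th largest eigenvalue λ₂ with 0 ≤ l₂ ≤ ⌊2NW₂(1−ε)⌋ − 1, then |⟨s₁, s₂⟩| ≤ 3·√(1 − min(λ₁, λ₂)). -/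
open MeasureTheory Matrix Real Set

/-- The 1-D prolate matrix `B_{N,𝕎}` with entries `∫_𝕎 exp(2πi f (m−n)) df`. -/
noncomputable def prolate1D (N : ℕ) (𝕎 : Set ℝ) : Matrix (Fin N) (Fin N) ℂ :=
  fun m n => ∫ f in 𝕎,
    Complex.exp (2 * (Real.pi : ℂ) * Complex.I * (f : ℂ) * (((m : ℕ) : ℂ) - ((n : ℕ) : ℂ)))

noncomputable def dtftAux {N : ℕ} (x : Fin N → ℂ) (f : ℝ) : ℂ :=
  ∑ n, x n * Complex.exp (-(2 * (Real.pi : ℂ) * Complex.I * (f : ℂ) * ((n : ℕ) : ℂ)))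

lemma dtftAux_cont {N : ℕ} (x : Fin N → ℂ) : Continuous (dtftAux x) := by
  unfold dtftAux
  fun_prop

lemma quad_aux (N : ℕ) (a b : ℝ) (x : Fin N → ℂ) :
    star x ⬝ᵥ (prolate1D N (Set.Icc a b) *ᵥ x)
      = ((∫ f in Set.Icc a b, ‖dtftAux x f‖ ^ 2 : ℝ) : ℂ) := by
  have hI : ∀ g : ℝ → ℂ, Continuous g → IntegrableOn g (Set.Icc a b) := fun g hg =>
    hg.continuousOn.integrableOn_Icc
  rw [← integral_complex_ofReal]
  have key : ∀ f : ℝ, (((‖dtftAux x f‖ ^ 2 : ℝ)) : ℂ) =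
      ∑ m : Fin N, ∑ n : Fin N, (star (x m) * x n) * Complex.exp
        (2 * (Real.pi : ℂ) * Complex.I * (f : ℂ) * (((m : ℕ) : ℂ) - ((n : ℕ) : ℂ))) := by
    intro f
    rw [Complex.ofReal_pow, ← Complex.conj_mul', dtftAux, map_sum, Finset.sum_mul_sum]
    refine Finset.sum_congr rfl fun m _ => Finset.sum_congr rfl fun n _ => ?_
    rw [map_mul, ← Complex.exp_conj]
    have : (starRingEnd ℂ) (-(2 * (Real.pi : ℂ) * Complex.I * (f : ℂ) * ((m : ℕ) : ℂ)))
        = 2 * (Real.pi : ℂ) * Complex.I * (f : ℂ) * ((m : ℕ) : ℂ) := by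
      have h2 : (starRingEnd ℂ) 2 = 2 := Complex.conj_ofNat 2
      simp [h2]
    rw [this, mul_mul_mul_comm, ← Complex.exp_add]
    congr 2
    ring
  simp_rw [key]
  rw [integral_finsetSum]
  · simp only [dotProduct, mulVec, Finset.mul_sum]
    refine Finset.sum_congr rfl fun m _ => ?_
    rw [integral_finsetSum]
    · refine Finset.sum_congr rfl fun n _ => ?_
      rw [integral_const_mul]
      simp only [prolate1D, Pi.star_apply]
      ring
    · intro n _
      exact hI _ (by fun_prop)
  · intro m _
    exact hI _ (by fun_prop)

lemma prolate_full (N : ℕ) : prolate1D N (Set.Icc (-(1/2)) (1/2)) = 1 := by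
  ext m n
  rw [prolate1D, integral_Icc_eq_integral_Ioc, ← intervalIntegral.integral_of_le (by norm_num)]
  by_cases h : m = n
  · subst h
    simp
    norm_num
  · rw [Matrix.one_apply_ne h]
    have hk : ((m : ℕ) : ℤ) - ((n : ℕ) : ℤ) ≠ 0 := by
      intro h'
      apply h
      ext
      omega
    obtain ⟨k, hkk⟩ : ∃ k : ℤ, k = ((m : ℕ) : ℤ) - ((n : ℕ) : ℤ) := ⟨_, rfl⟩
    have hk0 : (k : ℂ) ≠ 0 := by
      rw [hkk]; exact_mod_cast hk
    have e : ((m : ℕ) : ℂ) - ((n : ℕ) : ℂ) = (k : ℂ) := by rw [hkk]; push_cast; rfl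
    rw [e]
    have hc : 2 * (Real.pi : ℂ) * Complex.I * (k : ℂ) ≠ 0 :=
      mul_ne_zero Complex.two_pi_I_ne_zero hk0
    have e2 : ∀ f : ℝ, 2 * (Real.pi : ℂ) * Complex.I * (f : ℂ) * (k : ℂ)
        = (2 * (Real.pi : ℂ) * Complex.I * (k : ℂ)) * f := fun f => by ring
    simp_rw [e2]
    rw [integral_exp_mul_complex hc, div_eq_zero_iff]
    left
    rw [sub_eq_zero, Complex.exp_eq_exp_iff_exists_int]
    refine ⟨k, ?_⟩
    push_cast
    ring

lemma herm_quad_aux {N : ℕ} (M : Matrix (Fin N) (Fin N) ℂ) (hM : M.IsHermitian)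
    (hpos : ∀ x : Fin N → ℂ, 0 ≤ (star x ⬝ᵥ (M *ᵥ x)).re)
    (s t : Fin N → ℂ) (l : ℝ) (hs : star s ⬝ᵥ s = 1) (hMs : M *ᵥ s = (l : ℂ) • s) :
    l * ‖star s ⬝ᵥ t‖ ^ 2 ≤ (star t ⬝ᵥ (M *ᵥ t)).re := by
  set c := star s ⬝ᵥ t with hc
  have h1 : star t ⬝ᵥ s = star c := by
    rw [hc, Matrix.star_dotProduct]
  have h2 : star s ⬝ᵥ (M *ᵥ t) = l * c := by
    rw [dotProduct_mulVec]
    have : star s ᵥ* M = star (M *ᵥ s) := by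
      rw [star_mulVec, hM.eq]
    rw [this, hMs, star_smul, smul_dotProduct]
    simp [hc]
  have h := hpos (t - c • s)
  have : star (t - c • s) ⬝ᵥ (M *ᵥ (t - c • s))
      = star t ⬝ᵥ (M *ᵥ t) - ((l * ‖c‖ ^ 2 : ℝ) : ℂ) := by
    rw [mulVec_sub, mulVec_smul, hMs, star_sub, star_smul]
    simp only [sub_dotProduct, dotProduct_sub, smul_dotProduct, dotProduct_smul, h1, h2, hs,
      smul_eq_mul]
    push_cast
    rw [← Complex.conj_mul']
    simp only [Complex.star_def]
    ring
  rw [this, Complex.sub_re, Complex.ofReal_re] at h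
  linarith

lemma unit_aux {N : ℕ} (s : Fin N → ℂ) (h : ∑ i, ‖s i‖ ^ 2 = 1) : star s ⬝ᵥ s = 1 := by
  simp only [dotProduct, Pi.star_apply, Complex.star_def, Complex.conj_mul']
  exact_mod_cast h

theorem dpss_eigenvector_near_orthogonality
    (f₁ f₂ W₁ W₂ : ℝ) (hW₁ : W₁ ∈ Set.Ioo (0 : ℝ) (1 / 2)) (hW₂ : W₂ ∈ Set.Ioo (0 : ℝ) (1 / 2))
    (hsub₁ : Set.Icc (f₁ - W₁) (f₁ + W₁) ⊆ Set.Icc (-(1 / 2) : ℝ) (1 / 2))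
    (hsub₂ : Set.Icc (f₂ - W₂) (f₂ + W₂) ⊆ Set.Icc (-(1 / 2) : ℝ) (1 / 2))
    (hdisj : Disjoint (Set.Icc (f₁ - W₁) (f₁ + W₁)) (Set.Icc (f₂ - W₂) (f₂ + W₂)))
    (ε : ℝ) (hε : ε ∈ Set.Ioo (0 : ℝ) 1) :
    ∃ Ntil₁ : ℕ, 1 ≤ Ntil₁ ∧
      ∀ (N : ℕ), Ntil₁ ≤ N →
        ∀ (hA₁ : (prolate1D N (Set.Icc (f₁ - W₁) (f₁ + W₁))).IsHermitian)
          (hA₂ : (prolate1D N (Set.Icc (f₂ - W₂) (f₂ + W₂))).IsHermitian)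
          (ν₁ ν₂ : Fin N → ℝ), Antitone ν₁ → Antitone ν₂ →
          (∃ σ : Equiv.Perm (Fin N), hA₁.eigenvalues = ν₁ ∘ σ) →
          (∃ σ : Equiv.Perm (Fin N), hA₂.eigenvalues = ν₂ ∘ σ) →
          ∀ (l₁ l₂ : Fin N),
            (l₁ : ℕ) + 1 ≤ ⌊2 * (N : ℝ) * W₁ * (1 - ε)⌋₊ →
            (l₂ : ℕ) + 1 ≤ ⌊2 * (N : ℝ) * W₂ * (1 - ε)⌋₊ →
            ∀ (s₁ s₂ : Fin N → ℂ),
              (∑ i, ‖s₁ i‖ ^ 2 = 1) → (∑ i, ‖s₂ i‖ ^ 2 = 1) →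
              (prolate1D N (Set.Icc (f₁ - W₁) (f₁ + W₁))).mulVec s₁ = (ν₁ l₁ : ℂ) • s₁ →
              (prolate1D N (Set.Icc (f₂ - W₂) (f₂ + W₂))).mulVec s₂ = (ν₂ l₂ : ℂ) • s₂ →
              ‖∑ i, (starRingEnd ℂ) (s₁ i) * s₂ i‖ ≤
                3 * Real.sqrt (1 - min (ν₁ l₁) (ν₂ l₂)) := by
  refine ⟨1, le_rfl, ?_⟩
  intro N _ hA₁ hA₂ ν₁ ν₂ _ _ _ _ l₁ l₂ _ _ s₁ s₂ hs₁ hs₂ he₁ he₂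
  have hc : ∑ i, (starRingEnd ℂ) (s₁ i) * s₂ i = star s₁ ⬝ᵥ s₂ := rfl
  rw [hc]
  have u₁ := unit_aux s₁ hs₁
  have u₂ := unit_aux s₂ hs₂
  have hle1 : ‖star s₁ ⬝ᵥ s₂‖ ^ 2 ≤ 1 := by
    have := herm_quad_aux (1 : Matrix (Fin N) (Fin N) ℂ) Matrix.isHermitian_one
      (fun x => by
        rw [← prolate_full, quad_aux, Complex.ofReal_re]
        exact integral_nonneg fun _ => by positivity) s₁ s₂ 1 u₁ (by simp)
    rw [one_mulVec, u₂] at this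
    simpa using this
  have hmain := herm_quad_aux _ hA₁ (fun x => by
        rw [quad_aux, Complex.ofReal_re]
        exact integral_nonneg fun _ => by positivity) s₁ s₂ _ u₁ he₁
  rw [quad_aux, Complex.ofReal_re] at hmain
  have hν₂ : ν₂ l₂ = ∫ f in Set.Icc (f₂ - W₂) (f₂ + W₂), ‖dtftAux s₂ f‖ ^ 2 := by
    have := quad_aux N (f₂ - W₂) (f₂ + W₂) s₂
    rw [he₂, dotProduct_smul, u₂, smul_eq_mul, mul_one] at this
    exact_mod_cast this
  have hone : (1 : ℝ) = ∫ f in Set.Icc (-(1/2) : ℝ) (1/2), ‖dtftAux s₂ f‖ ^ 2 := by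
    have := quad_aux N (-(1/2)) (1/2) s₂
    rw [prolate_full, one_mulVec, u₂] at this
    exact_mod_cast this
  have hint : ∀ a b : ℝ, IntegrableOn (fun f => ‖dtftAux s₂ f‖ ^ 2) (Set.Icc a b) := fun a b =>
    ((dtftAux_cont s₂).norm.pow 2).continuousOn.integrableOn_Icc
  have hsum : (∫ f in Set.Icc (f₁ - W₁) (f₁ + W₁), ‖dtftAux s₂ f‖ ^ 2) + ν₂ l₂ ≤ 1 := by
    rw [hν₂, hone, ← setIntegral_union hdisj measurableSet_Icc (hint _ _) (hint _ _)]
    exact setIntegral_mono_set (hint _ _) (Filter.Eventually.of_forall fun _ => by positivity)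
      (Set.union_subset hsub₁ hsub₂).eventuallyLE
  set c := ‖star s₁ ⬝ᵥ s₂‖
  have hc0 : 0 ≤ c := norm_nonneg _
  suffices h : (c / 3) ^ 2 ≤ 1 - min (ν₁ l₁) (ν₂ l₂) by
    have := Real.le_sqrt_of_sq_le h
    linarith
  rcases le_total (ν₁ l₁) (8 / 9) with h | h
  · have := min_le_left (ν₁ l₁) (ν₂ l₂)
    nlinarith
  · have := min_le_right (ν₁ l₁) (ν₂ l₂)
    nlinarith [sq_nonneg c, mul_le_mul_of_nonneg_right h (sq_nonneg c)]
end

section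
/- Let 𝕎◇ = ⋃_{i=0}^{J−1} 𝕎◇_i ⊆ [−1/2, 1/2]² be a parallelepipedic multiband set consisting of J ≥ 1 pairwise disjoint parallelogram bands. Then there exists a constant C > 0 (depending only on 𝕎◇) such that for all M, N ≥ 2 and every ε ∈ (0, 1/2), the number of indices p ∈ {0, …, MN−1} with ε ≤ λ_{(M,N),𝕎◇}^{(p)} ≤ 1 − ε is at most C·(M·log N + N·log M)/(ε(1−ε)). -/
open MeasureTheory Matrix Real Set

/-- The parallelogram band `{(f,g) : |af + bg − u| ≤ W0 and |cf + dg − v| ≤ W1}`. -/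
def pband (a b c d u v W0 W1 : ℝ) : Set (ℝ × ℝ) :=
  {fg : ℝ × ℝ | |a * fg.1 + b * fg.2 - u| ≤ W0 ∧ |c * fg.1 + d * fg.2 - v| ≤ W1}


lemma sum_eig_sq {n : Type*} [Fintype n] [DecidableEq n] {A : Matrix n n ℂ} (hA : A.IsHermitian) :
    ∑ i, (hA.eigenvalues i)^2 = ∑ i, ∑ j, ‖A i j‖^2 := by
  have h1 : (A * A).trace = ∑ i, ((hA.eigenvalues i : ℂ))^2 := by
    conv_lhs => rw [hA.spectral_theorem]
    rw [← map_mul, Unitary.conjStarAlgAut_apply, Matrix.trace_mul_cycle]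
    simp [Matrix.trace, sq]
  have h2 : (A * A).trace = ∑ i, ∑ j, ((‖A i j‖^2 : ℝ) : ℂ) := by
    simp only [Matrix.trace, Matrix.diag, Matrix.mul_apply]
    refine Finset.sum_congr rfl fun i _ => Finset.sum_congr rfl fun j _ => ?_
    rw [← hA.apply j i, ← Complex.normSq_eq_norm_sq]
    exact Complex.mul_conj _
  rw [h1] at h2
  exact_mod_cast h2

lemma sum_eig {n : Type*} [Fintype n] [DecidableEq n] {A : Matrix n n ℂ} (hA : A.IsHermitian) :
    ∑ i, (hA.eigenvalues i) = ∑ i, (A i i).re := by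
  have := congrArg Complex.re hA.trace_eq_sum_eigenvalues
  simpa [Matrix.trace] using this.symm

lemma count_le {n : Type*} [Fintype n] (μ : n → ℝ) (h0 : ∀ i, 0 ≤ μ i) (h1 : ∀ i, μ i ≤ 1)
    (ε : ℝ) (hε : ε ∈ Set.Ioo (0:ℝ) (1/2)) :
    (Nat.card {p : n // ε ≤ μ p ∧ μ p ≤ 1 - ε} : ℝ) * (ε * (1 - ε)) ≤ ∑ i, (μ i - (μ i)^2) := by
  classical
  rw [Nat.card_eq_fintype_card, Fintype.card_subtype, ← nsmul_eq_mul, ← Finset.sum_const]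
  refine (Finset.sum_le_sum (g := fun i => μ i - (μ i)^2) ?_).trans
    (Finset.sum_le_sum_of_subset_of_nonneg (Finset.subset_univ _) ?_)
  · intro i hi
    simp only [Finset.mem_filter] at hi
    nlinarith [hi.2.1, hi.2.2, hε.1]
  · intro i _ _
    nlinarith [h0 i, h1 i]

noncomputable def EE (k : ℤ) (x : ℝ) : ℂ := Complex.exp (-(2 * (Real.pi : ℂ) * Complex.I * k * x))

lemma EE_norm (k : ℤ) (x : ℝ) : ‖EE k x‖ = 1 := by
  have : -(2 * (Real.pi : ℂ) * Complex.I * k * x) = ((-(2 * π * k * x) : ℝ) : ℂ) * Complex.I := by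
    push_cast; ring
  rw [EE, this, Complex.norm_exp_ofReal_mul_I]

lemma EE_cont (k : ℤ) : Continuous (EE k) := by
  unfold EE; fun_prop

lemma EE_eq_fourier (k : ℤ) (x : ℝ) (T : ℝ) (hT : T = 1) : EE k x = (fourier (-k) (x : AddCircle T)) := by
  subst hT
  rw [fourier_coe_apply, EE]
  congr 1
  push_cast
  ring

lemma integral_supp (φ : ℝ → ℂ) (hs : ∀ x, x ∉ Icc (-(1/2):ℝ) (1/2) → φ x = 0) :
    ∫ x, φ x = ∫ x in (-(1/2):ℝ)..(1/2), φ x := by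
  rw [intervalIntegral.integral_of_le (by norm_num), ← integral_Icc_eq_integral_Ioc,
    setIntegral_eq_integral_of_forall_compl_eq_zero hs]

lemma par1 (φ : ℝ → ℂ) (hm : Measurable φ) (C : ℝ) (hC : ∀ x, ‖φ x‖ ≤ C)
    (hs : ∀ x, x ∉ Icc (-(1/2):ℝ) (1/2) → φ x = 0) :
    ∑' k : ℤ, ‖∫ x, EE k x * φ x‖ₑ ^ 2 = ∫⁻ x, ‖φ x‖ₑ ^ 2 := by
  have hab : (-(1/2) : ℝ) < 1/2 := by norm_num
  have hL : MemLp φ 2 (volume.restrict (Ioc (-(1/2):ℝ) (1/2))) :=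
    MemLp.of_bound hm.aestronglyMeasurable C (Filter.Eventually.of_forall hC)
  have h := hasSum_sq_fourierCoeffOn hab hL
  have e1 : ∀ k : ℤ, fourierCoeffOn hab φ k = ∫ x, EE k x * φ x := by
    intro k
    rw [integral_supp _ (fun x hx => by rw [hs x hx, mul_zero]), fourierCoeffOn_eq_integral]
    rw [show (1 / ((1:ℝ)/2 - -(1/2))) = 1 by norm_num, one_smul]
    refine intervalIntegral.integral_congr fun x _ => ?_
    simp only [smul_eq_mul]
    rw [EE_eq_fourier k x (1 / 2 - -(1 / 2)) (by norm_num)]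
  simp_rw [e1] at h
  rw [show ((1:ℝ)/2 - -(1/2))⁻¹ = 1 by norm_num, one_smul,
    intervalIntegral.integral_of_le hab.le] at h
  have e2 : ∫⁻ x, ‖φ x‖ₑ ^ 2 = ∫⁻ x in Ioc (-(1/2):ℝ) (1/2), ‖φ x‖ₑ ^ 2 := by
    rw [restrict_Ioc_eq_restrict_Icc, ← lintegral_indicator measurableSet_Icc]
    refine lintegral_congr fun x => ?_
    by_cases hx : x ∈ Icc (-(1/2):ℝ) (1/2)
    · rw [indicator_of_mem hx]
    · rw [indicator_of_notMem hx, hs x hx]; simp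
  have e3 : ∀ z : ℂ, ‖z‖ₑ ^ 2 = ENNReal.ofReal (‖z‖^2) := by
    intro z
    rw [ENNReal.ofReal_pow (norm_nonneg _), ofReal_norm]
  rw [e2]
  simp_rw [e3]
  rw [← ENNReal.ofReal_tsum_of_nonneg (fun _ => by positivity) h.summable, h.tsum_eq,
    ofReal_integral_eq_lintegral_ofReal]
  · exact hL.integrable_norm_pow (by norm_num)
  · exact Filter.Eventually.of_forall fun x => by positivity

lemma EE_int_Icc (k : ℤ) (hk : k ≠ 0) (x y : ℝ) : ‖∫ t in Icc x y, EE k t‖ ≤ 1 / |(k:ℝ)| := by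
  have hk' : 0 < |(k:ℝ)| := abs_pos.mpr (by exact_mod_cast hk)
  rcases lt_or_ge y x with h | h
  · rw [Icc_eq_empty (not_le.mpr h)]; simp
  rw [integral_Icc_eq_integral_Ioc, ← intervalIntegral.integral_of_le h]
  have hc : -(2 * (Real.pi : ℂ) * Complex.I * k) ≠ 0 := by
    simp [Real.pi_ne_zero, hk]
  have : ∀ t, EE k t = Complex.exp (-(2 * (Real.pi : ℂ) * Complex.I * k) * t) := by
    intro t; rw [EE]; congr 1; ring
  simp_rw [this]
  rw [integral_exp_mul_complex hc]
  simp_rw [← this]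
  rw [norm_div]
  have e : ‖-(2 * (Real.pi : ℂ) * Complex.I * k)‖ = 2 * π * |(k:ℝ)| := by
    simp [abs_of_pos Real.pi_pos]
  rw [e, div_le_div_iff₀ (by positivity) hk', one_mul]
  have := norm_sub_le (EE k y) (EE k x)
  rw [EE_norm, EE_norm] at this
  nlinarith [Real.pi_gt_three]


lemma tail1 (c : ℝ) (hc : 0 ≤ c) (K : ℕ) (hK : 1 ≤ K) (n : ℕ) :
    ∑ i ∈ Finset.range n, (if K ≤ i then ENNReal.ofReal (c / (i:ℝ)^2) else 0)
      ≤ ENNReal.ofReal (2 * c / K) := by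
  rw [← Finset.sum_filter]
  have hsub : (Finset.range n).filter (fun i => K ≤ i) = Finset.Ioo (K-1) n := by
    ext i; simp only [Finset.mem_filter, Finset.mem_range, Finset.mem_Ioo]; omega
  rw [hsub, ← ENNReal.ofReal_sum_of_nonneg (fun i _ => by positivity)]
  apply ENNReal.ofReal_le_ofReal
  have h := sum_Ioo_inv_sq_le (α := ℝ) (K-1) n
  rw [Nat.cast_sub hK] at h
  simp only [Nat.cast_one, sub_add_cancel] at h
  calc ∑ i ∈ Finset.Ioo (K-1) n, c / (i:ℝ)^2 = c * ∑ i ∈ Finset.Ioo (K-1) n, ((i:ℝ)^2)⁻¹ := by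
        rw [Finset.mul_sum]; rfl
    _ ≤ c * (2 / K) := by gcongr
    _ = _ := by ring

lemma tail2 (c : ℝ) (hc : 0 ≤ c) (M m : ℕ) (hm : m < M) (a : ℤ → ENNReal)
    (ha : ∀ k : ℤ, k ≠ 0 → a k ≤ ENNReal.ofReal (c / (k:ℝ)^2)) :
    ∑' k : ℤ, (if k ∈ Finset.Ico (-(m:ℤ)) ((M:ℤ) - m) then 0 else a k) ≤
      ENNReal.ofReal (2 * c / ((M - m : ℕ) : ℝ)) + ENNReal.ofReal (2 * c / ((m + 1 : ℕ) : ℝ)) := by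
  have key : ∀ f : ℤ → ENNReal, ∑' k, f k = ∑' n : ℕ, f n + ∑' n : ℕ, f (-(n + 1 : ℤ)) := fun f =>
    (HasSum.of_nat_of_neg_add_one ENNReal.summable.hasSum ENNReal.summable.hasSum).tsum_eq
  rw [key]
  refine add_le_add ?_ ?_
  · refine ENNReal.tsum_le_of_sum_range_le fun n => (Finset.sum_le_sum ?_).trans
      (tail1 c hc (M - m) (by omega) n)
    intro i _
    by_cases h : M - m ≤ i
    · rw [if_pos h, if_neg (by rw [Finset.mem_Ico]; omega)]
      exact (ha i (by omega)).trans (by simp)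
    · rw [if_neg h, if_pos (by rw [Finset.mem_Ico]; omega)]
  · refine ENNReal.tsum_le_of_sum_range_le fun n => ?_
    refine le_trans ?_ (tail1 c hc (m + 1) (by omega) (n+1))
    rw [Finset.sum_range_succ']
    refine le_trans (Finset.sum_le_sum ?_) le_self_add
    intro i _
    by_cases h : m + 1 ≤ i + 1
    · rw [if_pos h, if_neg (by rw [Finset.mem_Ico]; omega)]
      refine (ha _ (by omega)).trans (le_of_eq ?_)
      congr 2
      push_cast
      ring
    · rw [if_neg h, if_pos (by rw [Finset.mem_Ico]; omega)]

lemma harm_le (M : ℕ) (hM : 2 ≤ M) : ∑ m ∈ Finset.range M, (1:ℝ) / ((m + 1 : ℕ) : ℝ) ≤ 3 * Real.log M := by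
  have h := harmonic_le_one_add_log M
  have h2 : ((harmonic M : ℚ) : ℝ) = ∑ m ∈ Finset.range M, (1:ℝ) / ((m + 1 : ℕ) : ℝ) := by
    simp [harmonic]
  rw [← h2]
  have h3 : Real.log 2 ≤ Real.log M := Real.log_le_log (by norm_num) (by exact_mod_cast hM)
  have := Real.log_two_gt_d9
  linarith

lemma harm_le' (M : ℕ) (hM : 2 ≤ M) : ∑ m ∈ Finset.range M, (1:ℝ) / ((M - m : ℕ) : ℝ) ≤ 3 * Real.log M := by
  rw [← Finset.sum_range_reflect]
  refine le_trans (le_of_eq ?_) (harm_le M hM)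
  refine Finset.sum_congr rfl fun m hm => ?_
  rw [Finset.mem_range] at hm
  congr 2
  omega

lemma tsum_split (h : ℤ → ℤ → ENNReal) (A B : Finset ℤ) :
    ∑' k, ∑' l, h k l ≤ ∑ k ∈ A, ∑ l ∈ B, h k l + ∑' k, (if k ∈ A then 0 else ∑' l, h k l)
      + ∑' l, (if l ∈ B then 0 else ∑' k, h k l) := by
  have e1 : ∑ k ∈ A, ∑ l ∈ B, h k l = ∑' k, ∑' l, (if k ∈ A ∧ l ∈ B then h k l else 0) := by
    rw [tsum_eq_sum (s := A)]
    · refine Finset.sum_congr rfl fun k hk => ?_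
      rw [tsum_eq_sum (s := B)]
      · exact Finset.sum_congr rfl fun l hl => by simp [hk, hl]
      · intro l hl; simp [hl]
    · intro k hk; simp [hk]
  have e2 : ∑' k, (if k ∈ A then 0 else ∑' l, h k l) = ∑' k, ∑' l, (if k ∈ A then 0 else h k l) := by
    refine tsum_congr fun k => ?_
    split_ifs <;> simp
  have e3 : ∑' l, (if l ∈ B then 0 else ∑' k, h k l) = ∑' k, ∑' l, (if l ∈ B then 0 else h k l) := by
    rw [ENNReal.tsum_comm]
    refine tsum_congr fun k => ?_
    split_ifs <;> simp
  rw [e1, e2, e3, ← ENNReal.tsum_add, ← ENNReal.tsum_add]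
  refine ENNReal.tsum_le_tsum fun k => ?_
  rw [← ENNReal.tsum_add, ← ENNReal.tsum_add]
  refine ENNReal.tsum_le_tsum fun l => ?_
  by_cases hk : k ∈ A <;> by_cases hl : l ∈ B <;> simp [hk, hl]

/-- horizontal slice transform -/
noncomputable def FF (W : Set (ℝ × ℝ)) (k : ℤ) (g : ℝ) : ℂ :=
  ∫ f, EE k f * W.indicator (fun _ => (1:ℂ)) (f, g)

noncomputable def HH (W : Set (ℝ × ℝ)) (k l : ℤ) : ℂ := ∫ g, EE l g * FF W k g

lemma ind_norm (W : Set (ℝ × ℝ)) (z : ℝ × ℝ) : ‖W.indicator (fun _ => (1:ℂ)) z‖ ≤ 1 := by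
  by_cases h : z ∈ W <;> simp [h]

lemma ind_meas {W : Set (ℝ × ℝ)} (hW : MeasurableSet W) :
    Measurable (W.indicator (fun _ => (1:ℂ))) := measurable_const.indicator hW

lemma FF_meas {W : Set (ℝ × ℝ)} (hW : MeasurableSet W) (k : ℤ) : Measurable (FF W k) := by
  unfold FF
  have : StronglyMeasurable (fun p : ℝ × ℝ => EE k p.2 * W.indicator (fun _ => (1:ℂ)) (p.2, p.1)) := by
    apply Measurable.stronglyMeasurable
    exact ((EE_cont k).measurable.comp measurable_snd).mul ((ind_meas hW).comp measurable_swap)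
  exact (this.integral_prod_right (ν := volume)).measurable

abbrev QQ : Set (ℝ × ℝ) := Set.Icc (-(1 / 2) : ℝ) (1 / 2) ×ˢ Set.Icc (-(1 / 2) : ℝ) (1 / 2)

lemma ind_supp1 {W : Set (ℝ × ℝ)} (hQ : W ⊆ QQ) (f g : ℝ) (hf : f ∉ Icc (-(1/2):ℝ) (1/2)) :
    W.indicator (fun _ => (1:ℂ)) (f, g) = 0 :=
  indicator_of_notMem (fun h => hf (hQ h).1) _

lemma ind_supp2 {W : Set (ℝ × ℝ)} (hQ : W ⊆ QQ) (f g : ℝ) (hf : g ∉ Icc (-(1/2):ℝ) (1/2)) :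
    W.indicator (fun _ => (1:ℂ)) (f, g) = 0 :=
  indicator_of_notMem (fun h => hf (hQ h).2) _

lemma FF_supp {W : Set (ℝ × ℝ)} (hQ : W ⊆ QQ) (k : ℤ) (g : ℝ) (hg : g ∉ Icc (-(1/2):ℝ) (1/2)) :
    FF W k g = 0 := by
  simp [FF, ind_supp2 hQ _ g hg]

lemma FF_norm {W : Set (ℝ × ℝ)} (hQ : W ⊆ QQ) (k : ℤ) (g : ℝ) : ‖FF W k g‖ ≤ 1 := by
  unfold FF
  rw [integral_supp _ (fun f hf => by rw [ind_supp1 hQ f g hf, mul_zero])]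
  refine (intervalIntegral.norm_integral_le_of_norm_le_const (C := 1) ?_).trans (by norm_num)
  intro x _
  rw [norm_mul, EE_norm, one_mul]
  exact ind_norm _ _

lemma sum_l {W : Set (ℝ × ℝ)} (hW : MeasurableSet W) (hQ : W ⊆ QQ) (k : ℤ) :
    ∑' l : ℤ, ‖HH W k l‖ₑ ^ 2 = ∫⁻ g, ‖FF W k g‖ₑ ^ 2 :=
  par1 (FF W k) (FF_meas hW k) 1 (FF_norm hQ k) (FF_supp hQ k)

lemma par2 {W : Set (ℝ × ℝ)} (hW : MeasurableSet W) (hQ : W ⊆ QQ) :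
    ∑' k : ℤ, ∑' l : ℤ, ‖HH W k l‖ₑ ^ 2 = volume W := by
  simp_rw [sum_l hW hQ]
  rw [← lintegral_tsum (fun k => ((FF_meas hW k).enorm.pow_const 2).aemeasurable)]
  have : ∀ g, ∑' k : ℤ, ‖FF W k g‖ₑ ^ 2 = ∫⁻ f, W.indicator 1 (f, g) := by
    intro g
    rw [show (∑' k : ℤ, ‖FF W k g‖ₑ ^ 2) = _ from
      par1 (fun f => W.indicator (fun _ => (1:ℂ)) (f, g))
      ((ind_meas hW).comp (measurable_id.prodMk measurable_const)) 1 (fun f => ind_norm _ _)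
      (fun f hf => ind_supp1 hQ f g hf)]
    refine lintegral_congr fun f => ?_
    by_cases h : (f, g) ∈ W <;> simp [h]
  simp_rw [this]
  rw [← lintegral_prod_symm' (fun z => W.indicator 1 z) (measurable_one.indicator hW),
    lintegral_indicator_one hW]
  rfl

lemma sum_l_le {W : Set (ℝ × ℝ)} (hW : MeasurableSet W) (hQ : W ⊆ QQ) (c : ℝ) (k : ℤ)
    (hF : ∀ g, ‖FF W k g‖ ≤ c / |(k:ℝ)|) :
    ∑' l : ℤ, ‖HH W k l‖ₑ ^ 2 ≤ ENNReal.ofReal (c ^ 2 / (k:ℝ) ^ 2) := by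
  rw [sum_l hW hQ]
  calc ∫⁻ g, ‖FF W k g‖ₑ ^ 2
      ≤ ∫⁻ g, (Icc (-(1/2):ℝ) (1/2)).indicator (fun _ => ENNReal.ofReal (c ^ 2 / (k:ℝ) ^ 2)) g := by
        refine lintegral_mono fun g => ?_
        by_cases hg : g ∈ Icc (-(1/2):ℝ) (1/2)
        · rw [indicator_of_mem hg, ← ofReal_norm, ← ENNReal.ofReal_pow (norm_nonneg _)]
          apply ENNReal.ofReal_le_ofReal
          rw [← sq_abs (k:ℝ), ← div_pow]
          exact pow_le_pow_left₀ (norm_nonneg _) (hF g) 2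
        · rw [FF_supp hQ k g hg]; simp
    _ = _ := by
        rw [lintegral_indicator_const measurableSet_Icc, Real.volume_Icc]
        norm_num

lemma HH_prod {W : Set (ℝ × ℝ)} (hW : MeasurableSet W) (hQ : W ⊆ QQ) (k l : ℤ) :
    HH W k l = ∫ z in W, EE k z.1 * EE l z.2 := by
  have hfin : volume W ≠ ⊤ := by
    refine ne_top_of_le_ne_top ?_ (measure_mono hQ)
    exact (isCompact_Icc.prod isCompact_Icc).measure_ne_top
  have hint : Integrable (fun z : ℝ × ℝ => W.indicator (fun z => EE k z.1 * EE l z.2) z) := by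
    rw [integrable_indicator_iff hW]
    refine Measure.integrableOn_of_bounded (M := 1) hfin ?_ ?_
    · have := EE_cont k; have := EE_cont l
      exact (by fun_prop : Continuous (fun z : ℝ × ℝ => EE k z.1 * EE l z.2)).aestronglyMeasurable
    · refine Filter.Eventually.of_forall fun z => ?_
      rw [norm_mul, EE_norm, EE_norm, one_mul]
  rw [← integral_indicator hW, Measure.volume_eq_prod, integral_prod_symm _ hint, HH]
  refine integral_congr_ae (Filter.Eventually.of_forall fun g => ?_)
  dsimp only [FF]
  rw [← integral_const_mul]
  refine integral_congr_ae (Filter.Eventually.of_forall fun f => ?_)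
  by_cases h : (f, g) ∈ W <;> simp [h]; ring

lemma HH_swap {W : Set (ℝ × ℝ)} (hW : MeasurableSet W) (hQ : W ⊆ QQ) (k l : ℤ) :
    HH (Prod.swap ⁻¹' W) l k = HH W k l := by
  rw [HH_prod hW hQ, HH_prod (measurable_swap hW) (fun z hz => ⟨(hQ hz).2, (hQ hz).1⟩)]
  have := (Measure.measurePreserving_swap (μ := (volume : Measure ℝ)) (ν := (volume : Measure ℝ))).setIntegral_preimage_emb
    MeasurableEquiv.prodComm.measurableEmbedding (fun z : ℝ × ℝ => EE k z.1 * EE l z.2) W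
  refine Eq.trans ?_ this
  simp only [Prod.fst_swap, Prod.snd_swap, mul_comm]
  rfl

lemma image_Ico (M m : ℕ) (hm : m < M) :
    Finset.univ.image (fun p : Fin M => ((p : ℕ) : ℤ) - m) = Finset.Ico (-(m:ℤ)) ((M:ℤ) - m) := by
  ext k
  simp only [Finset.mem_image, Finset.mem_univ, true_and, Finset.mem_Ico]
  constructor
  · rintro ⟨p, rfl⟩; have := p.2; omega
  · intro h
    exact ⟨⟨(k + m).toNat, by omega⟩, by simp only; omega⟩

lemma sum_Ico_fin {β : Type*} [AddCommMonoid β] (M m : ℕ) (hm : m < M) (h : ℤ → β) :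
    ∑ k ∈ Finset.Ico (-(m:ℤ)) ((M:ℤ) - m), h k = ∑ p : Fin M, h (((p : ℕ) : ℤ) - m) := by
  rw [← image_Ico M m hm, Finset.sum_image]
  intro p _ q _ hpq
  simp only [sub_left_inj, Nat.cast_inj] at hpq
  exact Fin.ext hpq

lemma row_bound {W : Set (ℝ × ℝ)} (hW : MeasurableSet W) (hQ : W ⊆ QQ) (c : ℝ) (hc : 0 ≤ c)
    (hF : ∀ k : ℤ, k ≠ 0 → ∀ g, ‖FF W k g‖ ≤ c / |(k:ℝ)|)
    (hF' : ∀ k : ℤ, k ≠ 0 → ∀ g, ‖FF (Prod.swap ⁻¹' W) k g‖ ≤ c / |(k:ℝ)|)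
    (M N m n : ℕ) (hm : m < M) (hn : n < N) :
    (volume W).toReal - ∑ p : Fin M, ∑ q : Fin N, ‖HH W (((p : ℕ) : ℤ) - m) (((q : ℕ) : ℤ) - n)‖ ^ 2
     ≤ 2 * c^2 / ((M - m : ℕ) : ℝ) + 2 * c^2 / ((m + 1 : ℕ) : ℝ)
       + (2 * c^2 / ((N - n : ℕ) : ℝ) + 2 * c^2 / ((n + 1 : ℕ) : ℝ)) := by
  have h1 := tsum_split (fun k l => ‖HH W k l‖ₑ ^ 2) (Finset.Ico (-(m:ℤ)) ((M:ℤ) - m))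
    (Finset.Ico (-(n:ℤ)) ((N:ℤ) - n))
  have h2 := tail2 (c^2) (sq_nonneg c) M m hm (fun k => ∑' l, ‖HH W k l‖ₑ ^ 2)
    (fun k hk => sum_l_le hW hQ c k (hF k hk))
  have h3 := tail2 (c^2) (sq_nonneg c) N n hn (fun l => ∑' k, ‖HH W k l‖ₑ ^ 2)
    (fun l hl => by
      have := sum_l_le (measurable_swap hW) (fun z hz => ⟨(hQ hz).2, (hQ hz).1⟩) c l (hF' l hl)
      simp_rw [HH_swap hW hQ] at this
      exact this)
  rw [par2 hW hQ] at h1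
  replace h1 := h1.trans (add_le_add (add_le_add le_rfl h2) h3)
  rw [sum_Ico_fin M m hm] at h1
  simp_rw [sum_Ico_fin N n hn] at h1
  have e3 : ∀ z : ℂ, ‖z‖ₑ ^ 2 = ENNReal.ofReal (‖z‖^2) := by
    intro z
    rw [ENNReal.ofReal_pow (norm_nonneg _), ofReal_norm]
  simp_rw [e3] at h1
  have e4 : ∑ p : Fin M, ∑ q : Fin N, ENNReal.ofReal (‖HH W (((p : ℕ) : ℤ) - m) (((q : ℕ) : ℤ) - n)‖ ^ 2)
      = ENNReal.ofReal (∑ p : Fin M, ∑ q : Fin N, ‖HH W (((p : ℕ) : ℤ) - m) (((q : ℕ) : ℤ) - n)‖ ^ 2) := by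
    rw [ENNReal.ofReal_sum_of_nonneg (fun _ _ => Finset.sum_nonneg fun _ _ => by positivity)]
    refine Finset.sum_congr rfl fun p _ => ?_
    rw [ENNReal.ofReal_sum_of_nonneg (fun _ _ => by positivity)]
  rw [e4, ← ENNReal.ofReal_add (by positivity) (by positivity),
    ← ENNReal.ofReal_add (by positivity) (by positivity),
    ← ENNReal.ofReal_add (by positivity) (by positivity),
    ← ENNReal.ofReal_add (by positivity) (by positivity)] at h1
  have h4 := ENNReal.toReal_mono ENNReal.ofReal_ne_top h1
  rw [ENNReal.toReal_ofReal (by positivity)] at h4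
  linarith

lemma prolate_entry {W : Set (ℝ × ℝ)} (hW : MeasurableSet W) (hQ : W ⊆ QQ) (M N : ℕ)
    (i j : Fin M × Fin N) :
    prolate2D M N W i j = HH W (((j.1 : ℕ) : ℤ) - (i.1 : ℕ)) (((j.2 : ℕ) : ℤ) - (i.2 : ℕ)) := by
  rw [HH_prod hW hQ, prolate2D]
  congr 1
  ext z
  rw [EE, EE, ← Complex.exp_add]
  congr 1
  push_cast
  ring

lemma prolate_diag (W : Set (ℝ × ℝ)) (M N : ℕ) (i : Fin M × Fin N) :
    (prolate2D M N W i i).re = (volume W).toReal := by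
  simp [prolate2D, Measure.real]

lemma trace_bound {W : Set (ℝ × ℝ)} (hW : MeasurableSet W) (hQ : W ⊆ QQ) (c : ℝ) (hc : 0 ≤ c)
    (hF : ∀ k : ℤ, k ≠ 0 → ∀ g, ‖FF W k g‖ ≤ c / |(k:ℝ)|)
    (hF' : ∀ k : ℤ, k ≠ 0 → ∀ g, ‖FF (Prod.swap ⁻¹' W) k g‖ ≤ c / |(k:ℝ)|)
    (M N : ℕ) (hM : 2 ≤ M) (hN : 2 ≤ N) :
    ∑ i, (prolate2D M N W i i).re - ∑ i, ∑ j, ‖prolate2D M N W i j‖ ^ 2 ≤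
      12 * c ^ 2 * (M * Real.log N + N * Real.log M) := by
  rw [← Finset.sum_sub_distrib]
  have h : ∀ i : Fin M × Fin N, (prolate2D M N W i i).re - ∑ j, ‖prolate2D M N W i j‖ ^ 2 ≤
      2 * c^2 * ((1 / ((M - i.1 : ℕ) : ℝ)) + 1 / ((i.1 + 1 : ℕ) : ℝ))
       + 2 * c^2 * (1 / ((N - i.2 : ℕ) : ℝ) + 1 / ((i.2 + 1 : ℕ) : ℝ)) := by
    intro i
    rw [prolate_diag, Fintype.sum_prod_type]
    simp_rw [prolate_entry hW hQ]
    refine (row_bound hW hQ c hc hF hF' M N i.1 i.2 i.1.2 i.2.2).trans (le_of_eq (by ring))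
  refine (Finset.sum_le_sum fun i _ => h i).trans ?_
  rw [Finset.sum_add_distrib, ← Finset.mul_sum, ← Finset.mul_sum, Fintype.sum_prod_type,
    Fintype.sum_prod_type]
  have s : ∀ K : ℕ, 2 ≤ K → ∑ x : Fin K, (1 / ((K - x : ℕ) : ℝ) + 1 / ((x + 1 : ℕ) : ℝ)) ≤ 6 * Real.log K := by
    intro K hK
    rw [Fin.sum_univ_eq_sum_range (fun x => 1 / ((K - x : ℕ) : ℝ) + 1 / ((x + 1 : ℕ) : ℝ)),
      Finset.sum_add_distrib]
    linarith [harm_le K hK, harm_le' K hK]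
  simp only [Finset.sum_const, Finset.card_univ, Fintype.card_fin, nsmul_eq_mul]
  rw [← Finset.mul_sum]
  have h1 : (N:ℝ) * ∑ x : Fin M, (1 / ((M - x : ℕ) : ℝ) + 1 / ((x + 1 : ℕ) : ℝ)) ≤ N * (6 * Real.log M) := by
    gcongr; exact s M hM
  have h2 : (M:ℝ) * ∑ x : Fin N, (1 / ((N - x : ℕ) : ℝ) + 1 / ((x + 1 : ℕ) : ℝ)) ≤ M * (6 * Real.log N) := by
    gcongr; exact s N hN
  have := sq_nonneg c
  nlinarith [mul_le_mul_of_nonneg_left h1 this, mul_le_mul_of_nonneg_left h2 this]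

/-- the trigonometric polynomial attached to a vector -/
noncomputable def TP (M N : ℕ) (x : Fin M × Fin N → ℂ) (z : ℝ × ℝ) : ℂ :=
  ∑ i, EE (i.1 : ℕ) z.1 * EE (i.2 : ℕ) z.2 * x i

lemma EE_cont2 (k l : ℤ) : Continuous (fun z : ℝ × ℝ => EE k z.1 * EE l z.2) := by
  have := EE_cont k; have := EE_cont l
  fun_prop

lemma TP_cont (M N : ℕ) (x : Fin M × Fin N → ℂ) : Continuous (TP M N x) := by
  unfold TP
  exact continuous_finset_sum _ fun i _ => (EE_cont2 _ _).mul continuous_const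

lemma cont_intOn {W : Set (ℝ × ℝ)} (hQ : W ⊆ QQ) {E : Type*} [NormedAddCommGroup E]
    (f : ℝ × ℝ → E) (hf : Continuous f) : IntegrableOn f W :=
  (hf.continuousOn.integrableOn_compact (isCompact_Icc.prod isCompact_Icc)).mono_set hQ

lemma EE_conj_mul (k l : ℕ) (x : ℝ) :
    Complex.exp (2 * (Real.pi : ℂ) * Complex.I * (x * ((k:ℂ) - l))) = star (EE k x) * EE l x := by
  rw [EE, EE, Complex.star_def, ← Complex.exp_conj, ← Complex.exp_add]
  congr 1
  simp [Complex.conj_ofNat]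
  ring

lemma quad_form {W : Set (ℝ × ℝ)} (hQ : W ⊆ QQ) (M N : ℕ) (x : Fin M × Fin N → ℂ) :
    (star x ⬝ᵥ (prolate2D M N W *ᵥ x)) = ((∫ z in W, ‖TP M N x z‖ ^ 2 : ℝ) : ℂ) := by
  have e : ∀ z, ((‖TP M N x z‖ ^ 2 : ℝ) : ℂ) = ∑ i, ∑ j, star (x i) *
      (Complex.exp (2 * (Real.pi : ℂ) * Complex.I *
      ((z.1 : ℂ) * (((i.1 : ℕ) : ℂ) - ((j.1 : ℕ) : ℂ)) +
       (z.2 : ℂ) * (((i.2 : ℕ) : ℂ) - ((j.2 : ℕ) : ℂ)))) * x j) := by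
    intro z
    rw [← Complex.normSq_eq_norm_sq, Complex.normSq_eq_conj_mul_self, TP, map_sum, Finset.sum_mul_sum]
    refine Finset.sum_congr rfl fun i _ => Finset.sum_congr rfl fun j _ => ?_
    rw [mul_add, Complex.exp_add, EE_conj_mul, EE_conj_mul]
    simp only [map_mul, Complex.star_def]
    ring
  rw [← integral_complex_ofReal]
  simp_rw [e]
  rw [integral_finset_sum]
  · simp only [dotProduct, Matrix.mulVec]
    refine Finset.sum_congr rfl fun i _ => ?_
    rw [integral_finset_sum, Finset.mul_sum]
    · refine Finset.sum_congr rfl fun j _ => ?_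
      rw [integral_const_mul, integral_mul_const]
      rfl
    · intro j _
      exact cont_intOn hQ _ (by fun_prop)
  · intro i _
    exact cont_intOn hQ _ (by fun_prop)

lemma EE_int_full (k : ℤ) : ∫ t in Icc (-(1/2):ℝ) (1/2), EE k t = if k = 0 then 1 else 0 := by
  split_ifs with hk
  · subst hk
    simp [EE]
    norm_num
  · rw [integral_Icc_eq_integral_Ioc, ← intervalIntegral.integral_of_le (by norm_num)]
    have hc : -(2 * (Real.pi : ℂ) * Complex.I * k) ≠ 0 := by
      simp [Real.pi_ne_zero, hk]
    have : ∀ t, EE k t = Complex.exp (-(2 * (Real.pi : ℂ) * Complex.I * k) * t) := by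
      intro t; rw [EE]; congr 1; ring
    simp_rw [this]
    rw [integral_exp_mul_complex hc, div_eq_zero_iff]
    left
    rw [sub_eq_zero, Complex.exp_eq_exp_iff_exists_int]
    refine ⟨-k, ?_⟩
    push_cast
    ring

lemma prolate_full_s18 (M N : ℕ) : prolate2D M N QQ = 1 := by
  ext i j
  rw [prolate_entry (measurableSet_Icc.prod measurableSet_Icc) subset_rfl,
    HH_prod (measurableSet_Icc.prod measurableSet_Icc) subset_rfl, Measure.volume_eq_prod,
    setIntegral_prod_mul, EE_int_full, EE_int_full, Matrix.one_apply]
  by_cases h : i = j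
  · subst h; simp
  · rw [if_neg h]
    have : ¬ (((j.1 : ℕ) : ℤ) - (i.1 : ℕ) = 0 ∧ ((j.2 : ℕ) : ℤ) - (i.2 : ℕ) = 0) := by
      rintro ⟨h1, h2⟩
      exact h (Prod.ext (Fin.ext (by omega)) (Fin.ext (by omega)))
    by_cases h1 : ((j.1 : ℕ) : ℤ) - (i.1 : ℕ) = 0
    · rw [if_neg (fun h2 => this ⟨h1, h2⟩), mul_zero]
    · rw [if_neg h1, zero_mul]

lemma eig_bounds {W : Set (ℝ × ℝ)} (hW : MeasurableSet W) (hQ : W ⊆ QQ) (M N : ℕ)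
    (hA : (prolate2D M N W).IsHermitian) (i : Fin M × Fin N) :
    0 ≤ hA.eigenvalues i ∧ hA.eigenvalues i ≤ 1 := by
  rw [hA.eigenvalues_eq, quad_form hQ]
  have h1 := quad_form (W := QQ) subset_rfl M N (hA.eigenvectorBasis i)
  rw [prolate_full_s18, Matrix.one_mulVec, dotProduct_comm, ← EuclideanSpace.inner_eq_star_dotProduct,
    inner_self_eq_norm_sq_to_K, hA.eigenvectorBasis.orthonormal.1 i] at h1
  have h2 : ∫ z in QQ, ‖TP M N (hA.eigenvectorBasis i) z‖ ^ 2 = 1 := by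
    have : ((1:ℝ):ℂ) = ((∫ z in QQ, ‖TP M N (hA.eigenvectorBasis i) z‖ ^ 2 : ℝ) : ℂ) := by
      rw [← h1]; simp
    exact_mod_cast this.symm
  simp only [RCLike.re_to_complex, Complex.ofReal_re]
  refine ⟨integral_nonneg fun z => by positivity, ?_⟩
  rw [← h2]
  refine setIntegral_mono_set (cont_intOn subset_rfl _ ((TP_cont _ _ _).norm.pow 2))
    (Filter.Eventually.of_forall fun z => by positivity) (Filter.Eventually.of_forall hQ)

lemma pband_closed (a b c d u v W0 W1 : ℝ) : IsClosed (pband a b c d u v W0 W1) := by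
  have h1 : IsClosed {z : ℝ × ℝ | |a * z.1 + b * z.2 - u| ≤ W0} :=
    isClosed_le (by fun_prop) (by fun_prop)
  have h2 : IsClosed {z : ℝ × ℝ | |c * z.1 + d * z.2 - v| ≤ W1} :=
    isClosed_le (by fun_prop) (by fun_prop)
  exact h1.inter h2

lemma pband_convex (a b c d u v W0 W1 : ℝ) : Convex ℝ (pband a b c d u v W0 W1) := by
  intro x hx y hy s t hs ht hst
  simp only [pband, mem_setOf_eq, abs_le] at hx hy ⊢
  simp only [Prod.fst_add, Prod.snd_add, Prod.smul_fst, Prod.smul_snd, smul_eq_mul]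
  obtain rfl : t = 1 - s := by linarith
  refine ⟨⟨?_, ?_⟩, ⟨?_, ?_⟩⟩ <;> nlinarith [hx.1.1, hx.1.2, hx.2.1, hx.2.2, hy.1.1, hy.1.2, hy.2.1, hy.2.2]

lemma slice_bound (S : Set ℝ) (hcl : IsClosed S) (hcv : S.OrdConnected)
    (hs : S ⊆ Icc (-(1/2):ℝ) (1/2)) (k : ℤ) (hk : k ≠ 0) :
    ‖∫ t in S, EE k t‖ ≤ 1 / |(k:ℝ)| := by
  rcases S.eq_empty_or_nonempty with h | h
  · subst h; simp
  · rw [eq_Icc_of_connected_compact ⟨h, hcv.isPreconnected⟩ (isCompact_Icc.of_isClosed_subset hcl hs)]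
    exact EE_int_Icc k hk _ _

lemma FF_union {J : ℕ} (P : Fin J → Set (ℝ × ℝ)) (hcl : ∀ i, IsClosed (P i))
    (hcv : ∀ i, Convex ℝ (P i)) (hQ : ∀ i, P i ⊆ QQ) (hd : ∀ i j, i ≠ j → Disjoint (P i) (P j))
    (k : ℤ) (hk : k ≠ 0) (g : ℝ) : ‖FF (⋃ i, P i) k g‖ ≤ J / |(k:ℝ)| := by
  have hcl' : ∀ i, IsClosed ((fun f : ℝ => (f, g)) ⁻¹' P i) := fun i =>
    (hcl i).preimage (by fun_prop)
  have e : FF (⋃ i, P i) k g = ∑ i, ∫ t in (fun f : ℝ => (f, g)) ⁻¹' P i, EE k t := by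
    rw [← integral_iUnion_fintype, ← integral_indicator, FF]
    · congr 1
      ext f
      by_cases h : (f, g) ∈ ⋃ i, P i
      · rw [indicator_of_mem h, indicator_of_mem (by simpa using h), mul_one]
      · rw [indicator_of_notMem h, indicator_of_notMem (by simpa using h), mul_zero]
    · exact MeasurableSet.iUnion fun i => (hcl' i).measurableSet
    · exact fun i => (hcl' i).measurableSet
    · exact fun i j hij => (hd i j hij).preimage _
    · intro i
      exact ((EE_cont k).continuousOn.integrableOn_compact isCompact_Icc).mono_set
        (fun f hf => (hQ i hf).1)
  rw [e]
  refine (norm_sum_le _ _).trans ((Finset.sum_le_sum fun i _ => slice_bound _ (hcl' i) ?_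
    (fun f hf => (hQ i hf).1) k hk).trans (le_of_eq ?_))
  · apply Convex.ordConnected
    intro x hx y hy s t hs ht hst
    have := hcv i hx hy hs ht hst
    simp only [mem_preimage] at *
    convert this using 1
    ext
    · simp
    · simp [← add_mul, hst]
  · simp; ring

theorem parallelepipedic_multiband_sharp_transition
    (J : ℕ) (hJ : 1 ≤ J) (a b c d u v W0 W1 : Fin J → ℝ)
    (hV : ∀ i, a i * d i - b i * c i ≠ 0)
    (hW0 : ∀ i, 0 < W0 i) (hW1 : ∀ i, 0 < W1 i)
    (hsub : ∀ i, pband (a i) (b i) (c i) (d i) (u i) (v i) (W0 i) (W1 i) ⊆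
      Set.Icc (-(1 / 2) : ℝ) (1 / 2) ×ˢ Set.Icc (-(1 / 2) : ℝ) (1 / 2))
    (hdisj : ∀ i j, i ≠ j →
      Disjoint (pband (a i) (b i) (c i) (d i) (u i) (v i) (W0 i) (W1 i))
        (pband (a j) (b j) (c j) (d j) (u j) (v j) (W0 j) (W1 j))) :
    ∃ C : ℝ, 0 < C ∧
      ∀ (M N : ℕ), 2 ≤ M → 2 ≤ N →
        ∀ (hA : (prolate2D M N
            (⋃ i, pband (a i) (b i) (c i) (d i) (u i) (v i) (W0 i) (W1 i))).IsHermitian)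
          (μ : Fin (M * N) → ℝ), Antitone μ →
          (∃ e : (Fin M × Fin N) ≃ Fin (M * N), hA.eigenvalues = μ ∘ e) →
          ∀ ε : ℝ, ε ∈ Set.Ioo (0 : ℝ) (1 / 2) →
            (Nat.card {p : Fin (M * N) // ε ≤ μ p ∧ μ p ≤ 1 - ε} : ℝ) ≤
              C * ((M : ℝ) * Real.log (N : ℝ) + (N : ℝ) * Real.log (M : ℝ)) /
                (ε * (1 - ε)) := by
  set P : Fin J → Set (ℝ × ℝ) := fun i => pband (a i) (b i) (c i) (d i) (u i) (v i) (W0 i) (W1 i)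
    with hP
  have hcl : ∀ i, IsClosed (P i) := fun i => pband_closed _ _ _ _ _ _ _ _
  have hcv : ∀ i, Convex ℝ (P i) := fun i => pband_convex _ _ _ _ _ _ _ _
  have hW : MeasurableSet (⋃ i, P i) := MeasurableSet.iUnion fun i => (hcl i).measurableSet
  have hQ : (⋃ i, P i) ⊆ QQ := iUnion_subset hsub
  have hF := FF_union P hcl hcv hsub hdisj
  have hF' : ∀ k : ℤ, k ≠ 0 → ∀ g, ‖FF (Prod.swap ⁻¹' (⋃ i, P i)) k g‖ ≤ J / |(k:ℝ)| := by
    rw [preimage_iUnion]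
    refine FF_union (fun i => Prod.swap ⁻¹' P i) (fun i => (hcl i).preimage continuous_swap)
      (fun i => ?_) (fun i z hz => ⟨(hsub i hz).2, (hsub i hz).1⟩)
      (fun i j hij => (hdisj i j hij).preimage _)
    intro x hx y hy s t hs ht hst
    exact hcv i hx hy hs ht hst
  refine ⟨12 * (J:ℝ) ^ 2, by positivity, ?_⟩
  intro M N hM hN hA μ _ ⟨e, he⟩ ε hε
  have hμ : ∀ p, μ p = hA.eigenvalues (e.symm p) := fun p => by rw [he]; simp
  have hε' : 0 < ε * (1 - ε) := mul_pos hε.1 (by linarith [hε.1, hε.2])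
  rw [le_div_iff₀ hε']
  refine (count_le μ (fun p => ?_) (fun p => ?_) ε hε).trans ?_
  · rw [hμ]; exact (eig_bounds hW hQ M N hA _).1
  · rw [hμ]; exact (eig_bounds hW hQ M N hA _).2
  · have h1 : ∑ p, (μ p - (μ p)^2) = ∑ i, (hA.eigenvalues i - (hA.eigenvalues i)^2) := by
      rw [← Equiv.sum_comp e, he]; rfl
    rw [h1, Finset.sum_sub_distrib, sum_eig, sum_eig_sq]
    exact trace_bound hW hQ J (by positivity) hF hF' M N hM hN
end
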